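/- arXiv:1706.02620 — 3 statements merged into one kernel-verified Lean document; each statement's English description precedes it below -/
import Mathlib

section
/- Let w ∈ A_∞, i.e. w ∈ A_p for some 1 ≤ p < ∞. Then there exists s > 1, depending only on n, p and [w]_{A_p}, such that w satisfies the reverse Hölder inequality with constant 2: for every cube Q, (⨍_Q w^s dx)^{1/s} ≤ 2 ⨍_Q w dx. In particular w ∈ RH_s. -/
open MeasureTheory ENNReal
open scoped Classical

noncomputable section

variable {n : ℕ}

/-- An axis-parallel half-open cube in `ℝⁿ`. -/
def IsCube (Q : Set (Fin n → ℝ)) : Prop :=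
  ∃ (a : Fin n → ℝ) (l : ℝ), 0 < l ∧ Q = {x | ∀ i, a i ≤ x i ∧ x i < a i + l}

/-- The average `⨍_Q f` of an `ℝ≥0∞`-valued function over a set, w.r.t. Lebesgue measure. -/
def eavg (Q : Set (Fin n → ℝ)) (f : (Fin n → ℝ) → ℝ≥0∞) : ℝ≥0∞ :=
  (∫⁻ x in Q, f x) / volume Q

/-- A weight: measurable, a.e. positive and finite, and locally integrable. -/
def IsWeight (w : (Fin n → ℝ) → ℝ≥0∞) : Prop :=
  Measurable w ∧ (∀ᵐ x ∂(volume : Measure (Fin n → ℝ)), 0 < w x ∧ w x < ∞) ∧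
    ∀ Q : Set (Fin n → ℝ), IsCube Q → ∫⁻ x in Q, w x < ∞

/-- The Muckenhoupt `A_p` constant, `1 ≤ p < ∞` (ess-sup form when `p = 1`). -/
def ApConst (p : ℝ) (w : (Fin n → ℝ) → ℝ≥0∞) : ℝ≥0∞ :=
  if p = 1 then
    ⨆ (Q : Set (Fin n → ℝ)) (_ : IsCube Q),
      essSup (fun x => eavg Q w / w x) (volume.restrict Q)
  else
    ⨆ (Q : Set (Fin n → ℝ)) (_ : IsCube Q),
      eavg Q w * (eavg Q fun x => w x ^ (1 - p / (p - 1))) ^ (p - 1)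

/-- Membership in the Muckenhoupt class `A_p`. -/
def MemAp (p : ℝ) (w : (Fin n → ℝ) → ℝ≥0∞) : Prop := ApConst p w < ∞

/-- The reverse Hölder `RH_s` constant. -/
def RHConst (s : ℝ) (w : (Fin n → ℝ) → ℝ≥0∞) : ℝ≥0∞ :=
  ⨆ (Q : Set (Fin n → ℝ)) (_ : IsCube Q),
    (eavg Q fun x => w x ^ s) ^ (1 / s) / eavg Q w

/-- Membership in the reverse Hölder class `RH_s`. -/
def MemRH (s : ℝ) (w : (Fin n → ℝ) → ℝ≥0∞) : Prop := RHConst s w < ∞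

/-- The `RH_∞` constant. -/
def RHInfConst (w : (Fin n → ℝ) → ℝ≥0∞) : ℝ≥0∞ :=
  ⨆ (Q : Set (Fin n → ℝ)) (_ : IsCube Q),
    essSup (fun x => w x / eavg Q w) (volume.restrict Q)

/-- Membership in `RH_∞`. -/
def MemRHInf (w : (Fin n → ℝ) → ℝ≥0∞) : Prop := RHInfConst w < ∞

/-- The Hardy–Littlewood maximal operator (over all cubes containing `x`). -/
def maximal (f : (Fin n → ℝ) → ℝ) (x : Fin n → ℝ) : ℝ≥0∞ :=
  ⨆ (Q : Set (Fin n → ℝ)) (_ : IsCube Q) (_ : x ∈ Q),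
    eavg Q fun y => ENNReal.ofReal |f y|

/-- The Hardy–Littlewood maximal operator acting on `ℝ≥0∞`-valued functions. -/
def emaximal (f : (Fin n → ℝ) → ℝ≥0∞) (x : Fin n → ℝ) : ℝ≥0∞ :=
  ⨆ (Q : Set (Fin n → ℝ)) (_ : IsCube Q) (_ : x ∈ Q), eavg Q f

/-- The norm `‖f‖_{L^p(w)} = (∫ f^p w dx)^(1/p)`. -/
def wLpNorm (p : ℝ) (w f : (Fin n → ℝ) → ℝ≥0∞) : ℝ≥0∞ :=
  (∫⁻ x, f x ^ p * w x) ^ (1 / p)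

def idx (a : Fin n → ℝ) (l : ℝ) (j : ℕ) (x : Fin n → ℝ) : Fin n → ℤ :=
  fun i => ⌊(2:ℝ)^j * ((x i - a i)/l)⌋

def dc (a : Fin n → ℝ) (l : ℝ) (j : ℕ) (x : Fin n → ℝ) : Set (Fin n → ℝ) :=
  {y | idx a l j y = idx a l j x}

lemma measurable_idx (a : Fin n → ℝ) (l : ℝ) (j : ℕ) : Measurable (idx a l j) := by
  unfold idx
  fun_prop

lemma measurableSet_dc (a : Fin n → ℝ) (l : ℝ) (j : ℕ) (x : Fin n → ℝ) :
    MeasurableSet (dc a l j x) :=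
  measurable_idx a l j (measurableSet_singleton (idx a l j x))

lemma dc_eq (a : Fin n → ℝ) {l : ℝ} (hl : 0 < l) (j : ℕ) (x : Fin n → ℝ) :
    dc a l j x = {y | ∀ i, (a i + l/2^j * idx a l j x i) ≤ y i ∧
      y i < (a i + l/2^j * idx a l j x i) + l/2^j} := by
  ext y
  simp only [dc, Set.mem_ofPred_eq]
  rw [funext_iff]
  refine forall_congr' fun i => ?_
  generalize idx a l j x i = k
  unfold idx
  rw [Int.floor_eq_iff]
  have h2 : (0:ℝ) < 2^j := by positivity
  have e : (2:ℝ)^j * ((y i - a i)/l) = (y i - a i) / (l/2^j) := by field_simp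
  have hp : 0 < l/2^j := by positivity
  rw [e, le_div_iff₀ hp, div_lt_iff₀ hp]
  constructor
  · rintro ⟨h1, h2⟩; constructor <;> nlinarith
  · rintro ⟨h1, h2⟩; constructor <;> nlinarith

lemma isCube_dc (a : Fin n → ℝ) {l : ℝ} (hl : 0 < l) (j : ℕ) (x : Fin n → ℝ) :
    IsCube (dc a l j x) :=
  ⟨_, _, by positivity, dc_eq a hl j x⟩

lemma cube_eq_pi (a : Fin n → ℝ) (l : ℝ) :
    {x : Fin n → ℝ | ∀ i, a i ≤ x i ∧ x i < a i + l} = Set.univ.pi fun i => Set.Ico (a i) (a i + l) := by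
  ext; simp

lemma volume_cube (a : Fin n → ℝ) (l : ℝ) :
    volume {x : Fin n → ℝ | ∀ i, a i ≤ x i ∧ x i < a i + l} = ENNReal.ofReal l ^ n := by
  rw [cube_eq_pi, Real.volume_pi_Ico]
  simp

lemma cube_ae_eq (a : Fin n → ℝ) {l : ℝ} (hl : 0 < l) :
    {x : Fin n → ℝ | ∀ i, a i ≤ x i ∧ x i < a i + l} =ᵐ[volume]
      Metric.closedBall (fun i => a i + l/2) (l/2) := by
  rw [cube_eq_pi, closedBall_pi _ (by positivity)]
  simp only [Real.closedBall_eq_Icc]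
  have := Measure.univ_pi_Ico_ae_eq_Icc (μ := fun _ : Fin n => (volume : Measure ℝ)) (f := a) (g := fun i => a i + l)
  rw [← Set.pi_univ_Icc] at this
  have e1 : ∀ i, a i + l/2 - l/2 = a i := fun i => by ring
  have e2 : ∀ i, a i + l/2 + l/2 = a i + l := fun i => by ring
  simp only [e1, e2]
  exact this

lemma volume_dc (a : Fin n → ℝ) {l : ℝ} (hl : 0 < l) (j : ℕ) (x : Fin n → ℝ) :
    volume (dc a l j x) = ENNReal.ofReal (l/2^j) ^ n := by
  rw [dc_eq a hl, volume_cube]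

lemma volume_dc_succ (a : Fin n → ℝ) {l : ℝ} (hl : 0 < l) (j : ℕ) (x : Fin n → ℝ) :
    volume (dc a l j x) = 2^n * volume (dc a l (j+1) x) := by
  rw [volume_dc a hl, volume_dc a hl, ← mul_pow]
  congr 1
  rw [show l/2^j = 2 * (l/2^(j+1)) by rw [pow_succ]; field_simp, ENNReal.ofReal_mul (by norm_num)]
  simp

lemma volume_dc_ne (a : Fin n → ℝ) {l : ℝ} (hl : 0 < l) (j : ℕ) (x : Fin n → ℝ) :
    volume (dc a l j x) ≠ 0 ∧ volume (dc a l j x) ≠ ∞ := by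
  rw [volume_dc a hl]
  constructor
  · have : 0 < l/2^j := by positivity
    exact pow_ne_zero _ (by simpa using this)
  · finiteness

lemma idx_succ {a : Fin n → ℝ} {l : ℝ} {j : ℕ} {x y : Fin n → ℝ}
    (h : idx a l (j+1) y = idx a l (j+1) x) : idx a l j y = idx a l j x := by
  have key : ∀ t : ℝ, ⌊t⌋ = ⌊2 * t⌋ / 2 := by
    intro t
    have := Int.floor_le t
    have := Int.lt_floor_add_one t
    have h1 : 2 * ⌊t⌋ ≤ ⌊2*t⌋ := by rw [Int.le_floor]; push_cast; linarith
    have h2 : ⌊2*t⌋ < 2 * ⌊t⌋ + 2 := by rw [Int.floor_lt]; push_cast; linarith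
    omega
  ext i
  have := congrFun h i
  simp only [idx, pow_succ'] at this ⊢
  rw [key, key (2 ^ j * ((x i - a i) / l)), ← mul_assoc, ← mul_assoc, this]

lemma idx_mono {a : Fin n → ℝ} {l : ℝ} {j j' : ℕ} (hj : j ≤ j') {x y : Fin n → ℝ}
    (h : idx a l j' y = idx a l j' x) : idx a l j y = idx a l j x := by
  induction hj with
  | refl => exact h
  | step _ ih => exact ih (idx_succ h)

lemma eavg_dc_congr {a : Fin n → ℝ} {l : ℝ} {j : ℕ} {x y : Fin n → ℝ}
    (h : idx a l j y = idx a l j x) : dc a l j y = dc a l j x := by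
  simp only [dc, h]

lemma dc_zero (a : Fin n → ℝ) {l : ℝ} (hl : 0 < l) {x : Fin n → ℝ}
    (hx : x ∈ {x : Fin n → ℝ | ∀ i, a i ≤ x i ∧ x i < a i + l}) :
    dc a l 0 x = {x : Fin n → ℝ | ∀ i, a i ≤ x i ∧ x i < a i + l} := by
  have : idx a l 0 x = 0 := by
    ext i
    have := hx i
    simp only [idx, pow_zero, one_mul, Pi.zero_apply]
    rw [Int.floor_eq_iff]
    rw [le_div_iff₀ hl, div_lt_iff₀ hl]
    push_cast
    constructor <;> linarith
  rw [dc_eq a hl, this]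
  simp

/-- summation over selected cubes -/
lemma cz_sum (a : Fin n → ℝ) (l : ℝ) (S : Set (Fin n → ℝ)) (τ : (Fin n → ℝ) → ℕ)
    (hτ : ∀ x ∈ S, ∀ y, idx a l (τ x) y = idx a l (τ x) x → y ∈ S ∧ τ y = τ x)
    (ν κ : Measure (Fin n → ℝ))
    (h : ∀ x ∈ S, ν (dc a l (τ x) x) ≤ κ (dc a l (τ x) x)) : ν S ≤ κ S := by
  let C : ℕ × (Fin n → ℤ) → Set (Fin n → ℝ) := fun q => {x | x ∈ S ∧ τ x = q.1 ∧ idx a l q.1 x = q.2}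
  have hC : ∀ q, C q = ∅ ∨ ∃ x ∈ S, C q = dc a l (τ x) x := by
    rintro ⟨j, k⟩
    rcases (C (j, k)).eq_empty_or_nonempty with h | ⟨x, hx, h1, h2⟩
    · exact Or.inl h
    · refine Or.inr ⟨x, hx, ?_⟩
      dsimp only at h1 h2
      subst h1 h2
      ext y
      constructor
      · rintro ⟨_, _, h⟩; exact h
      · intro h
        have := hτ x hx y h
        exact ⟨this.1, this.2, h⟩
  have hm : ∀ q, MeasurableSet (C q) := by
    intro q
    rcases hC q with h | ⟨x, _, h⟩
    · rw [h]; exact MeasurableSet.empty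
    · rw [h]; exact measurableSet_dc _ _ _ _
  have hU : S = ⋃ q, C q := by
    ext x
    simp only [Set.mem_iUnion]
    exact ⟨fun h => ⟨(τ x, idx a l (τ x) x), h, rfl, rfl⟩, fun ⟨_, h, _⟩ => h⟩
  have hd : Pairwise (Function.onFun Disjoint C) := by
    rintro ⟨j, k⟩ ⟨j', k'⟩ hne
    refine Set.disjoint_left.2 ?_
    rintro x ⟨_, h1, h2⟩ ⟨_, h3, h4⟩
    dsimp only at h1 h2 h3 h4
    subst h1 h2 h3 h4
    exact hne rfl
  rw [hU, measure_iUnion hd hm, measure_iUnion hd hm]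
  refine ENNReal.tsum_le_tsum fun q => ?_
  rcases hC q with h' | ⟨x, hx, h'⟩
  · rw [h']; simp
  · rw [h']; exact h x hx

lemma cube_vol_ne {Q : Set (Fin n → ℝ)} (hQ : IsCube Q) : volume Q ≠ 0 ∧ volume Q ≠ ∞ := by
  obtain ⟨a, l, hl, rfl⟩ := hQ
  rw [volume_cube]
  exact ⟨pow_ne_zero _ (by simpa using hl), by finiteness⟩

lemma cube_meas {Q : Set (Fin n → ℝ)} (hQ : IsCube Q) : MeasurableSet Q := by
  obtain ⟨a, l, hl, rfl⟩ := hQ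
  rw [cube_eq_pi]
  exact MeasurableSet.univ_pi fun i => measurableSet_Ico

lemma holder_set {w : (Fin n → ℝ) → ℝ≥0∞} (hw : IsWeight w) {p : ℝ} (hp : 1 < p)
    (S : Set (Fin n → ℝ)) :
    volume S ^ p ≤ (∫⁻ x in S, w x) * (∫⁻ x in S, w x ^ (1 - p / (p - 1))) ^ (p - 1) := by
  have hp0 : 0 < p := by linarith
  have hp1 : 0 < p - 1 := by linarith
  have hpq : p.HolderConjugate (p / (p-1)) := Real.HolderConjugate.conjExponent hp
  have H := ENNReal.lintegral_mul_le_Lp_mul_Lq (volume.restrict S) hpq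
    (f := fun x => w x ^ (1/p)) (g := fun x => w x ^ (-(1/p)))
    (hw.1.pow_const _).aemeasurable (hw.1.pow_const _).aemeasurable
  have h1 : ∫⁻ x in S, ((fun x => w x ^ (1/p)) * (fun x => w x ^ (-(1/p)))) x = volume S := by
    rw [← setLIntegral_one]
    refine lintegral_congr_ae (ae_restrict_of_ae ?_)
    filter_upwards [hw.2.1] with x hx
    simp only [Pi.mul_apply]
    rw [← ENNReal.rpow_add _ _ hx.1.ne' hx.2.ne]
    simp
  have h2 : ∀ x, (w x ^ (1/p)) ^ p = w x := fun x => by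
    rw [← ENNReal.rpow_mul, one_div_mul_cancel hp0.ne', ENNReal.rpow_one]
  have h3 : ∀ x, (w x ^ (-(1/p))) ^ (p/(p-1)) = w x ^ (1 - p / (p - 1)) := fun x => by
    rw [← ENNReal.rpow_mul]
    congr 1
    field_simp
    ring
  rw [h1] at H
  simp only [h2, h3] at H
  have H2 := ENNReal.rpow_le_rpow H hp0.le
  rw [ENNReal.mul_rpow_of_nonneg _ _ hp0.le, ← ENNReal.rpow_mul, ← ENNReal.rpow_mul,
    one_div_mul_cancel hp0.ne', ENNReal.rpow_one] at H2
  convert H2 using 3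
  field_simp

lemma ap_key {w : (Fin n → ℝ) → ℝ≥0∞} (hw : IsWeight w) {p : ℝ} (hp : 1 ≤ p) {K : ℝ≥0∞}
    (hA : ApConst p w ≤ K) {Q : Set (Fin n → ℝ)} (hQ : IsCube Q) {S : Set (Fin n → ℝ)}
    (hS : S ⊆ Q) :
    (∫⁻ x in Q, w x) * volume S ^ p ≤ K * (∫⁻ x in S, w x) * volume Q ^ p := by
  obtain ⟨hV0, hV⟩ := cube_vol_ne hQ
  unfold ApConst at hA
  split_ifs at hA with h1
  · subst h1
    simp only [ENNReal.rpow_one]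
    have h2 : essSup (fun x => eavg Q w / w x) (volume.restrict Q) ≤ K :=
      (le_iSup₂ (f := fun (Q : Set (Fin n → ℝ)) (_ : IsCube Q) =>
        essSup (fun x => eavg Q w / w x) (volume.restrict Q)) Q hQ).trans hA
    have h3 : ∀ᵐ x ∂(volume.restrict Q), eavg Q w / w x ≤ K := by
      filter_upwards [ENNReal.ae_le_essSup (μ := volume.restrict Q) (fun x => eavg Q w / w x)] with x hx
      exact hx.trans h2
    have h4 : ∫⁻ _ in S, eavg Q w ≤ ∫⁻ x in S, K * w x := by
      refine lintegral_mono_ae ?_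
      filter_upwards [ae_restrict_of_ae_restrict_of_subset hS h3, ae_restrict_of_ae hw.2.1] with x hx hx'
      rwa [ENNReal.div_le_iff hx'.1.ne' hx'.2.ne] at hx
    rw [setLIntegral_const, lintegral_const_mul _ hw.1] at h4
    calc (∫⁻ x in Q, w x) * volume S = (eavg Q w * volume S) * volume Q := by
          unfold eavg
          rw [mul_right_comm, ENNReal.div_mul_cancel hV0 hV]
      _ ≤ _ := by gcongr
  · have hp' : 1 < p := lt_of_le_of_ne hp (Ne.symm h1)
    have hp0 : 0 < p := by linarith
    have hp1 : 0 < p - 1 := by linarith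
    have h2 : eavg Q w * (eavg Q fun x => w x ^ (1 - p / (p - 1))) ^ (p - 1) ≤ K :=
      (le_iSup₂ (f := fun (Q : Set (Fin n → ℝ)) (_ : IsCube Q) =>
        eavg Q w * (eavg Q fun x => w x ^ (1 - p / (p - 1))) ^ (p - 1)) Q hQ).trans hA
    have hVp : volume Q ^ p = volume Q * volume Q ^ (p - 1) := by
      nth_rw 2 [← ENNReal.rpow_one (volume Q)]
      rw [← ENNReal.rpow_add _ _ hV0 hV]; congr 1; ring
    have h3 : (∫⁻ x in Q, w x) * (∫⁻ x in Q, w x ^ (1 - p / (p - 1))) ^ (p - 1) ≤ K * volume Q ^ p := by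
      calc _ = (eavg Q w * (eavg Q fun x => w x ^ (1 - p / (p - 1))) ^ (p - 1)) * volume Q ^ p := by
            rw [hVp, mul_mul_mul_comm, ← ENNReal.mul_rpow_of_nonneg _ _ hp1.le]
            unfold eavg
            rw [ENNReal.div_mul_cancel hV0 hV, ENNReal.div_mul_cancel hV0 hV]
        _ ≤ _ := by gcongr
    calc (∫⁻ x in Q, w x) * volume S ^ p
        ≤ (∫⁻ x in Q, w x) * ((∫⁻ x in S, w x) * (∫⁻ x in S, w x ^ (1 - p / (p - 1))) ^ (p - 1)) := by
          gcongr; exact holder_set hw hp' S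
      _ ≤ (∫⁻ x in Q, w x) * ((∫⁻ x in S, w x) * (∫⁻ x in Q, w x ^ (1 - p / (p - 1))) ^ (p - 1)) := by
          gcongr
      _ = (∫⁻ x in S, w x) * ((∫⁻ x in Q, w x) * (∫⁻ x in Q, w x ^ (1 - p / (p - 1))) ^ (p - 1)) := by ring
      _ ≤ (∫⁻ x in S, w x) * (K * volume Q ^ p) := by gcongr
      _ = _ := by ring

/-- The `A_∞` property. -/
lemma ainf {w : (Fin n → ℝ) → ℝ≥0∞} (hw : IsWeight w) {p : ℝ} (hp : 1 ≤ p) {K : ℝ≥0∞}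
    (hA : ApConst p w ≤ K) {M : ℝ} (hM1 : 0 < M) (hM : 2 ^ p * K ≤ ENNReal.ofReal M)
    {Q : Set (Fin n → ℝ)} (hQ : IsCube Q) {E : Set (Fin n → ℝ)}
    (hE : E ⊆ Q) (hEm : MeasurableSet E) (hv : 2 * volume E ≤ volume Q) :
    ∫⁻ x in E, w x ≤ ENNReal.ofReal (1 - 1 / M) * ∫⁻ x in Q, w x := by
  obtain ⟨hV0, hV⟩ := cube_vol_ne hQ
  have hp0 : 0 < p := by linarith
  have hWf : ∫⁻ x in Q, w x ≠ ∞ := (hw.2.2 Q hQ).ne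
  have hs : volume E + volume (Q \ E) = volume Q := by
    have := measure_inter_add_sdiff (μ := volume) Q hEm
    rwa [Set.inter_eq_right.2 hE] at this
  have hsw : (∫⁻ x in E, w x) + ∫⁻ x in Q \ E, w x = ∫⁻ x in Q, w x := by
    have := lintegral_inter_add_sdiff (μ := volume) w Q hEm
    rwa [Set.inter_eq_right.2 hE] at this
  have hv2 : volume Q ≤ 2 * volume (Q \ E) := by
    have hEf : volume E ≠ ∞ := measure_ne_top_of_subset hE hV
    have h1 : volume E ≤ volume (Q \ E) := by
      rw [← hs, two_mul] at hv
      exact (ENNReal.add_le_add_iff_left hEf).1 hv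
    rw [← hs, two_mul]; gcongr
  have hk := ap_key hw hp hA hQ (S := Q \ E) Set.sdiff_subset
  have h2 : ∫⁻ x in Q, w x ≤ ENNReal.ofReal M * ∫⁻ x in Q \ E, w x := by
    have h3 : volume Q ^ p ≤ 2 ^ p * volume (Q \ E) ^ p := by
      rw [← ENNReal.mul_rpow_of_nonneg _ _ hp0.le]; gcongr
    have h4 : (∫⁻ x in Q, w x) * volume Q ^ p ≤ (ENNReal.ofReal M * ∫⁻ x in Q \ E, w x) * volume Q ^ p := by
      calc _ ≤ (∫⁻ x in Q, w x) * (2 ^ p * volume (Q \ E) ^ p) := by gcongr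
        _ = 2 ^ p * ((∫⁻ x in Q, w x) * volume (Q \ E) ^ p) := by ring
        _ ≤ 2 ^ p * (K * (∫⁻ x in Q \ E, w x) * volume Q ^ p) := by gcongr
        _ = (2 ^ p * K) * (∫⁻ x in Q \ E, w x) * volume Q ^ p := by ring
        _ ≤ _ := by gcongr
    have a1 : volume Q ^ p ≠ 0 := by simp [hV0, hV]
    have a2 : volume Q ^ p ≠ ∞ := by simp [hV0, hV]
    exact (ENNReal.mul_le_mul_iff_left a1 a2).1 h4
  have hf1 : ∫⁻ x in E, w x ≠ ∞ := ne_top_of_le_ne_top hWf (hsw ▸ le_self_add)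
  have hf2 : ∫⁻ x in Q \ E, w x ≠ ∞ := ne_top_of_le_ne_top hWf (hsw ▸ le_add_self)
  rw [← hsw] at h2 ⊢
  generalize ∫⁻ x in E, w x = A at *
  generalize ∫⁻ x in Q \ E, w x = B at *
  lift A to NNReal using hf1
  lift B to NNReal using hf2
  rw [← ENNReal.ofReal_coe_nnreal, ← ENNReal.ofReal_coe_nnreal, ← ENNReal.ofReal_add (by simp) (by simp)] at *
  rw [← ENNReal.ofReal_mul hM1.le, ENNReal.ofReal_le_ofReal_iff (by positivity)] at h2
  rw [← ENNReal.ofReal_mul' (by positivity)]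
  apply ENNReal.ofReal_le_ofReal
  have : (1 - 1/M) * ((A:ℝ) + B) = A + B - (A+B)/M := by ring
  rw [this]
  have : ((A:ℝ)+B)/M ≤ B := by rw [div_le_iff₀ hM1]; linarith
  linarith

lemma leb {w : (Fin n → ℝ) → ℝ≥0∞} (hw : IsWeight w) (a : Fin n → ℝ) {l : ℝ} (hl : 0 < l) :
    ∀ᵐ x, x ∈ {x : Fin n → ℝ | ∀ i, a i ≤ x i ∧ x i < a i + l} →
      Filter.Tendsto (fun j => eavg (dc a l j x) w) Filter.atTop (nhds (w x)) := by
  set Q := {x : Fin n → ℝ | ∀ i, a i ≤ x i ∧ x i < a i + l} with hQd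
  have hQ : IsCube Q := ⟨a, l, hl, rfl⟩
  have hQm := cube_meas hQ
  have h := (IsUnifLocDoublingMeasure.vitaliFamily (volume : Measure (Fin n → ℝ)) 1).ae_tendsto_lintegral_div
    (f := Q.indicator w) (hw.1.indicator hQm).aemeasurable
    (by rw [lintegral_indicator hQm]; exact (hw.2.2 Q hQ).ne)
  filter_upwards [h] with x hx hxQ
  rw [Set.indicator_of_mem hxQ] at hx
  have hδ : Filter.Tendsto (fun j : ℕ => l/2^j/2) Filter.atTop (nhdsWithin 0 (Set.Ioi 0)) := by
    rw [tendsto_nhdsWithin_iff]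
    constructor
    · have := tendsto_pow_atTop_nhds_zero_of_lt_one (r := (1/2:ℝ)) (by norm_num) (by norm_num)
      have := this.const_mul (l/2)
      simp only [mul_zero] at this
      refine this.congr fun j => ?_
      rw [one_div, inv_pow]; field_simp
    · exact Filter.Eventually.of_forall fun j => by simp only [Set.mem_Ioi]; positivity
  have hT := IsUnifLocDoublingMeasure.tendsto_closedBall_filterAt (μ := (volume : Measure (Fin n → ℝ)))
    (K := 1) (x := x) (fun j i => (a i + l/2^j * idx a l j x i) + l/2^j/2) _ hδ
    (Filter.Eventually.of_forall fun j => by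
      have hpos : 0 < l/2^j/2 := by positivity
      have hm : x ∈ dc a l j x := rfl
      rw [dc_eq a hl] at hm
      rw [one_mul, closedBall_pi _ hpos.le]
      intro i _
      have := hm i
      simp only [Real.closedBall_eq_Icc]
      constructor <;> linarith)
  refine (hx.comp hT).congr fun j => ?_
  have hae := cube_ae_eq (fun i => a i + l/2^j * idx a l j x i) (l := l/2^j) (by positivity)
  rw [← dc_eq a hl] at hae
  simp only [Function.comp, eavg]
  rw [← setLIntegral_congr hae, ← measure_congr hae]
  congr 1
  refine setLIntegral_congr_fun (measurableSet_dc _ _ _ _) ?_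
  intro y hy
  refine Set.indicator_of_mem ?_ _
  rw [hQd, ← dc_zero a hl hxQ]
  exact idx_mono (Nat.zero_le j) hy

def czSet (a : Fin n → ℝ) (l : ℝ) (w : (Fin n → ℝ) → ℝ≥0∞) (lam : ℝ≥0∞) : Set (Fin n → ℝ) :=
  {x | (∀ i, a i ≤ x i ∧ x i < a i + l) ∧ ∃ j, lam < eavg (dc a l j x) w}

def czT (a : Fin n → ℝ) (l : ℝ) (w : (Fin n → ℝ) → ℝ≥0∞) (lam : ℝ≥0∞) (x : Fin n → ℝ) : ℕ :=
  sInf {j | lam < eavg (dc a l j x) w}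

lemma czT_spec {a : Fin n → ℝ} {l : ℝ} {w : (Fin n → ℝ) → ℝ≥0∞} {lam : ℝ≥0∞} {x : Fin n → ℝ}
    (hx : x ∈ czSet a l w lam) : lam < eavg (dc a l (czT a l w lam x) x) w :=
  Nat.sInf_mem (s := {j | lam < eavg (dc a l j x) w}) hx.2

lemma czT_lt {a : Fin n → ℝ} {l : ℝ} {w : (Fin n → ℝ) → ℝ≥0∞} {lam : ℝ≥0∞} {x : Fin n → ℝ}
    {j : ℕ} (hj : j < czT a l w lam x) : eavg (dc a l j x) w ≤ lam :=
  not_lt.1 fun h => Nat.notMem_of_lt_sInf hj h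

lemma cz_local {a : Fin n → ℝ} {l : ℝ} (hl : 0 < l) {w : (Fin n → ℝ) → ℝ≥0∞} {lam : ℝ≥0∞}
    {x : Fin n → ℝ} (hx : x ∈ czSet a l w lam) {y : Fin n → ℝ}
    (hy : idx a l (czT a l w lam x) y = idx a l (czT a l w lam x) x) :
    y ∈ czSet a l w lam ∧ czT a l w lam y = czT a l w lam x := by
  have hyQ : y ∈ {x : Fin n → ℝ | ∀ i, a i ≤ x i ∧ x i < a i + l} := by
    rw [← dc_zero a hl hx.1]
    exact idx_mono (Nat.zero_le _) hy
  have hlt : lam < eavg (dc a l (czT a l w lam x) y) w := by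
    rw [eavg_dc_congr hy]; exact czT_spec hx
  have hyS : y ∈ czSet a l w lam := ⟨hyQ, _, hlt⟩
  refine ⟨hyS, le_antisymm (Nat.sInf_le hlt) ?_⟩
  by_contra! hc
  have h1 := czT_lt hc
  have h2 := czT_spec hyS
  rw [eavg_dc_congr (idx_mono hc.le hy)] at h2
  exact absurd h2 (not_lt.2 h1)

lemma cz_meas (a : Fin n → ℝ) {l : ℝ} (hl : 0 < l) (w : (Fin n → ℝ) → ℝ≥0∞) (lam : ℝ≥0∞) :
    MeasurableSet (czSet a l w lam) := by
  have : czSet a l w lam = {x : Fin n → ℝ | ∀ i, a i ≤ x i ∧ x i < a i + l} ∩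
      ⋃ j, idx a l j ⁻¹' {k | lam < eavg {y | idx a l j y = k} w} := by
    ext x
    simp [czSet, dc]
  rw [this]
  refine (cube_meas ⟨a, l, hl, rfl⟩).inter (MeasurableSet.iUnion fun j => ?_)
  exact measurable_idx a l j (Set.to_countable _).measurableSet

lemma decay {w : (Fin n → ℝ) → ℝ≥0∞} {β : ℝ≥0∞}
    (hA : ∀ Q : Set (Fin n → ℝ), IsCube Q → ∀ E ⊆ Q, MeasurableSet E → 2 * volume E ≤ volume Q →
      ∫⁻ x in E, w x ≤ β * ∫⁻ x in Q, w x)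
    (a : Fin n → ℝ) {l : ℝ} (hl : 0 < l) {lam : ℝ≥0∞} (h0 : lam ≠ 0) (hi : lam ≠ ∞)
    (hlam : eavg {x : Fin n → ℝ | ∀ i, a i ≤ x i ∧ x i < a i + l} w ≤ lam) :
    ∫⁻ x in czSet a l w (2 ^ (n+1) * lam), w x ≤ β * ∫⁻ x in czSet a l w lam, w x := by
  set m : ℝ≥0∞ := 2 ^ (n+1) * lam with hm
  have hm0 : m ≠ 0 := by positivity
  have hmi : m ≠ ∞ := by finiteness
  have hle : lam ≤ m := by
    rw [hm]
    exact le_mul_of_one_le_left (by positivity) (one_le_pow₀ (by norm_num))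
  have hle2 : 2 ^ n * lam ≤ m := by
    rw [hm, pow_succ']
    gcongr
    exact le_mul_of_one_le_left (by positivity) (by norm_num)
  have hsub : czSet a l w m ⊆ czSet a l w lam := by
    rintro x ⟨hx, j, hj⟩
    exact ⟨hx, j, hle.trans_lt hj⟩
  have hWd : ∀ S, MeasurableSet S → (volume.withDensity w) S = ∫⁻ x in S, w x := fun S hS =>
    withDensity_apply _ hS
  have hmm := cz_meas a hl w m
  have hml := cz_meas a hl w lam
  -- bound on selected cubes
  have hup : ∀ x ∈ czSet a l w lam,
      ∫⁻ y in dc a l (czT a l w lam x) x, w y ≤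
        2 ^ n * lam * volume (dc a l (czT a l w lam x) x) := by
    intro x hx
    have hs := czT_spec hx
    rcases hτ : czT a l w lam x with _ | j
    · rw [hτ, dc_zero a hl hx.1] at hs
      exact absurd hs (not_lt.2 hlam)
    · have h1 : eavg (dc a l j x) w ≤ lam := czT_lt (by omega)
      obtain ⟨v0, vi⟩ := volume_dc_ne a hl j x
      unfold eavg at h1
      rw [ENNReal.div_le_iff v0 vi, volume_dc_succ a hl] at h1
      calc _ ≤ ∫⁻ y in dc a l j x, w y := lintegral_mono_set fun y hy => idx_succ hy
        _ ≤ _ := h1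
        _ = _ := by ring
  have key : ∀ x ∈ czSet a l w lam,
      2 * volume (dc a l (czT a l w lam x) x ∩ czSet a l w m) ≤
        volume (dc a l (czT a l w lam x) x) := by
    intro x hx
    set P := dc a l (czT a l w lam x) x with hP
    have hPm : MeasurableSet P := measurableSet_dc _ _ _ _
    have hPup := hup x hx
    obtain ⟨v0, vi⟩ := volume_dc_ne a hl (czT a l w lam x) x
    rw [← hP] at v0 vi hPup
    -- selection for m happens later
    have hlater : ∀ z ∈ P ∩ czSet a l w m, czT a l w lam x ≤ czT a l w m z := by
      rintro z ⟨hzP, hz⟩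
      have hz' := cz_local hl hx hzP
      rw [← hz'.2]
      refine Nat.sInf_le ?_
      exact hle.trans_lt (czT_spec hz)
    have hs := cz_sum a l (P ∩ czSet a l w m) (czT a l w m)
      (by
        intro z hz y hy
        have h1 := cz_local hl hz.2 hy
        refine ⟨⟨?_, h1.1⟩, h1.2⟩
        have := idx_mono (hlater z hz) hy
        exact this.trans hz.1)
      (m • volume) (volume.withDensity w)
      (by
        intro z hz
        have h1 := czT_spec hz.2
        obtain ⟨u0, ui⟩ := volume_dc_ne a hl (czT a l w m z) z
        unfold eavg at h1
        rw [ENNReal.lt_div_iff_mul_lt (Or.inl u0) (Or.inl ui)] at h1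
        rw [hWd _ (measurableSet_dc _ _ _ _)]
        exact h1.le)
    have h2 : m * volume (P ∩ czSet a l w m) ≤ 2 ^ n * lam * volume P := by
      calc _ ≤ (volume.withDensity w) (P ∩ czSet a l w m) := hs
        _ ≤ (volume.withDensity w) P := measure_mono Set.inter_subset_left
        _ ≤ _ := by rw [hWd _ hPm]; exact hPup
    have h3 : 2 ^ n * lam * (2 * volume (P ∩ czSet a l w m)) ≤ 2 ^ n * lam * volume P := by
      convert h2 using 1
      rw [hm, pow_succ]; ring
    exact (ENNReal.mul_le_mul_iff_right (by positivity) (by finiteness)).1 h3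
  have hs := cz_sum a l (czSet a l w lam) (czT a l w lam)
    (fun x hx y hy => cz_local hl hx hy)
    ((volume.withDensity w).restrict (czSet a l w m)) (β • volume.withDensity w)
    (by
      intro x hx
      have hPm := measurableSet_dc a l (czT a l w lam x) x
      rw [Measure.restrict_apply hPm, Measure.smul_apply, hWd _ hPm, hWd _ (hPm.inter hmm)]
      exact hA _ (isCube_dc a hl _ _) _ Set.inter_subset_left (hPm.inter hmm) (key x hx))
  rw [Measure.restrict_apply hml, Set.inter_eq_right.2 hsub, hWd _ hmm, Measure.smul_apply, hWd _ hml] at hs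
  exact hs

lemma geom_id (c : ℝ≥0∞) (m : ℕ) :
    (1 + c) ^ m = 1 + ∑ k ∈ Finset.range m, c * (1 + c) ^ k := by
  induction m with
  | zero => simp
  | succ m ih => rw [Finset.sum_range_succ, ← add_assoc, ← ih]; ring

lemma main_bound {w : (Fin n → ℝ) → ℝ≥0∞} (hw : IsWeight w) {β c : ℝ≥0∞} {δ : ℝ} (hδ : 0 < δ)
    (hc : (1 + c) = (2 ^ (n+1)) ^ δ) (hcβ : c * (1 - (1 + c) * β)⁻¹ ≤ 1)
    (hA : ∀ Q : Set (Fin n → ℝ), IsCube Q → ∀ E ⊆ Q, MeasurableSet E → 2 * volume E ≤ volume Q →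
      ∫⁻ x in E, w x ≤ β * ∫⁻ x in Q, w x)
    {Q : Set (Fin n → ℝ)} (hQ : IsCube Q) :
    ∫⁻ x in Q, w x ^ (1 + δ) ≤ 2 * (eavg Q w ^ δ * ∫⁻ x in Q, w x) := by
  have hQm := cube_meas hQ
  obtain ⟨v0, vi⟩ := cube_vol_ne hQ
  obtain ⟨a, l, hl, hQe⟩ := id hQ
  set L := eavg Q w with hL
  have hWi : ∫⁻ x in Q, w x ≠ ∞ := (hw.2.2 Q hQ).ne
  have hW0 : ∫⁻ x in Q, w x ≠ 0 := by
    intro h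
    rw [lintegral_eq_zero_iff hw.1] at h
    have h2 : ∀ᵐ x ∂(volume.restrict Q), False := by
      filter_upwards [h, ae_restrict_of_ae hw.2.1] with x hx hx'
      exact hx'.1.ne' hx
    rw [Filter.eventually_false_iff_eq_bot, ae_eq_bot, Measure.restrict_eq_zero] at h2
    exact v0 h2
  have hL0 : L ≠ 0 := (ENNReal.div_pos hW0 vi).ne'
  have hLi : L ≠ ∞ := ENNReal.div_ne_top hWi v0
  let lam : ℕ → ℝ≥0∞ := fun k => (2 ^ (n+1)) ^ k * L
  let E : ℕ → Set (Fin n → ℝ) := fun k => czSet a l w (lam k)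
  have hEm : ∀ k, MeasurableSet (E k) := fun k => cz_meas a hl w _
  have hEQ : ∀ k, E k ⊆ Q := fun k x hx => by rw [hQe]; exact hx.1
  have hdec : ∀ k, ∫⁻ x in E k, w x ≤ β ^ k * ∫⁻ x in Q, w x := by
    intro k
    induction k with
    | zero => simpa using lintegral_mono_set (hEQ 0)
    | succ k ih =>
      have := decay hA a hl (lam := lam k) (by positivity) (by finiteness)
        (by rw [← hQe]; exact le_mul_of_one_le_left (by positivity) (one_le_pow₀ (one_le_pow₀ (by norm_num))))
      have e : 2 ^ (n+1) * lam k = lam (k+1) := by simp only [lam]; ring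
      rw [e] at this
      calc _ ≤ _ := this
        _ ≤ β * (β ^ k * ∫⁻ x in Q, w x) := by gcongr
        _ = _ := by ring
  have hpt : ∀ᵐ x ∂(volume.restrict Q), w x ^ (1 + δ) ≤
      L ^ δ * (w x + ∑' k, c * (1 + c) ^ k * (E k).indicator w x) := by
    rw [ae_restrict_iff' hQm]
    filter_upwards [leb hw a hl, hw.2.1] with x hx hpos hxQ
    have hxQ' := hxQ
    rw [hQe] at hxQ'
    have ht := hx hxQ'
    have hex : ∃ m, w x ≤ lam m ∧ ∀ k < m, x ∈ E k := by
      by_cases h : ∃ k, x ∉ E k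
      · refine ⟨Nat.find h, ?_, fun k hk => not_not.1 (Nat.find_min h hk)⟩
        have h1 := Nat.find_spec h
        refine le_of_tendsto' ht fun j => ?_
        by_contra! hj
        exact h1 ⟨hxQ', j, hj⟩
      · push Not at h
        obtain ⟨m, hm⟩ := ENNReal.exists_nat_gt (ENNReal.div_ne_top hpos.2.ne hL0)
        refine ⟨m, ?_, fun k _ => h k⟩
        rw [ENNReal.div_lt_iff (Or.inl hL0) (Or.inl hLi)] at hm
        refine hm.le.trans ?_
        simp only [lam]
        gcongr
        have h1 : (m : ℝ≥0∞) ≤ 2 ^ m := by exact_mod_cast Nat.lt_two_pow_self.le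
        refine h1.trans ?_
        gcongr
        exact le_self_pow₀ (by norm_num) (by omega)
    obtain ⟨m, hm, hk⟩ := hex
    have h1 : w x ^ δ ≤ L ^ δ * (1 + c) ^ m := by
      calc w x ^ δ ≤ (lam m) ^ δ := by gcongr
        _ = _ := by
          simp only [lam]
          rw [ENNReal.mul_rpow_of_nonneg _ _ hδ.le, hc, mul_comm]
          congr 1
          generalize (2 : ℝ≥0∞) ^ (n+1) = A
          rw [← ENNReal.rpow_natCast, ← ENNReal.rpow_natCast, ← ENNReal.rpow_mul,
            ← ENNReal.rpow_mul, mul_comm (m:ℝ)]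
    calc w x ^ (1 + δ) = w x ^ δ * w x := by
          rw [add_comm, ENNReal.rpow_add _ _ hpos.1.ne' hpos.2.ne, ENNReal.rpow_one]
      _ ≤ L ^ δ * (1 + c) ^ m * w x := by gcongr
      _ = L ^ δ * (w x + ∑ k ∈ Finset.range m, c * (1 + c) ^ k * (E k).indicator w x) := by
          rw [geom_id, mul_assoc, add_mul, one_mul, Finset.sum_mul]
          congr 2
          refine Finset.sum_congr rfl fun k hkm => ?_
          rw [Set.indicator_of_mem (hk k (Finset.mem_range.1 hkm))]
      _ ≤ _ := by gcongr; exact ENNReal.sum_le_tsum _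
  have hmi : ∀ k, Measurable fun x => c * (1 + c) ^ k * (E k).indicator w x := fun k =>
    (hw.1.indicator (hEm k)).const_mul _
  calc ∫⁻ x in Q, w x ^ (1 + δ)
      ≤ ∫⁻ x in Q, L ^ δ * (w x + ∑' k, c * (1 + c) ^ k * (E k).indicator w x) := lintegral_mono_ae hpt
    _ = L ^ δ * ((∫⁻ x in Q, w x) + ∑' k, c * (1 + c) ^ k * ∫⁻ x in E k, w x) := by
        have hmt : Measurable fun x => w x + ∑' k, c * (1 + c) ^ k * (E k).indicator w x :=
          hw.1.add (Measurable.tsum hmi)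
        rw [lintegral_const_mul _ hmt, lintegral_add_left hw.1,
          lintegral_tsum fun k => (hmi k).aemeasurable]
        congr 3
        ext k
        rw [lintegral_const_mul _ (hw.1.indicator (hEm k)), lintegral_indicator (hEm k),
          Measure.restrict_restrict (hEm k), Set.inter_eq_left.2 (hEQ k)]
    _ ≤ L ^ δ * ((∫⁻ x in Q, w x) + ∑' k, c * (1 + c) ^ k * (β ^ k * ∫⁻ x in Q, w x)) := by
        gcongr with k
        exact hdec k
    _ = L ^ δ * ((∫⁻ x in Q, w x) + (c * (1 - (1 + c) * β)⁻¹) * ∫⁻ x in Q, w x) := by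
        rw [← ENNReal.tsum_geometric, ← ENNReal.tsum_mul_left, ← ENNReal.tsum_mul_right]
        congr 3
        ext k
        rw [mul_pow]; ring
    _ ≤ L ^ δ * ((∫⁻ x in Q, w x) + 1 * ∫⁻ x in Q, w x) := by gcongr
    _ = _ := by ring

/-- If `w ∈ A_p` (`1 ≤ p < ∞`) then there is `s > 1`, depending only on
`n`, `p` and an upper bound `K` for `[w]_{A_p}`, such that for every cube `Q`,
`(⨍_Q w^s)^{1/s} ≤ 2 ⨍_Q w`; in particular `w ∈ RH_s`. -/
theorem statement3 (n : ℕ) (p : ℝ) (hp : 1 ≤ p) (K : ℝ≥0∞) (hK : K < ∞) :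
    ∃ s : ℝ, 1 < s ∧
      ∀ w : (Fin n → ℝ) → ℝ≥0∞, IsWeight w → ApConst p w ≤ K →
        (∀ Q : Set (Fin n → ℝ), IsCube Q →
          (eavg Q fun x => w x ^ s) ^ (1 / s) ≤ 2 * eavg Q w) ∧ MemRH s w := by

  set M : ℝ := 1 + (2 ^ p * K).toReal with hM
  have hKi : 2 ^ p * K ≠ ∞ := ENNReal.mul_ne_top (by simp) hK.ne
  have hM1 : 1 ≤ M := by rw [hM]; linarith [ENNReal.toReal_nonneg (a := 2 ^ p * K)]
  have hMK : 2 ^ p * K ≤ ENNReal.ofReal M := by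
    rw [← ENNReal.ofReal_toReal hKi]
    exact ENNReal.ofReal_le_ofReal (by rw [hM]; linarith)
  have hM0 : 0 < M := by linarith
  set b : ℝ := 1 - 1 / M with hb
  have hb0 : 0 ≤ b := by
    have : 1 / M ≤ 1 := by rw [div_le_one hM0]; exact hM1
    linarith
  have hb1 : b < 1 := by
    have : 0 < 1 / M := by positivity
    linarith
  have hA1 : (1:ℝ) < 2 ^ (n+1) := one_lt_pow₀ (by norm_num) (by omega)
  have hr1 : 1 < 2 / (1 + b) := by rw [lt_div_iff₀ (by linarith)]; linarith
  set δ : ℝ := Real.log (2 / (1 + b)) / Real.log (2 ^ (n+1)) with hδd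
  have hlog : 0 < Real.log (2 ^ (n+1)) := Real.log_pos hA1
  have hδ : 0 < δ := div_pos (Real.log_pos hr1) hlog
  have hpow : ((2:ℝ) ^ (n+1)) ^ δ = 2 / (1 + b) := by
    rw [Real.rpow_def_of_pos (by positivity), hδd, mul_div_cancel₀ _ hlog.ne', Real.exp_log (by linarith)]
  have hcpos : 0 < (1 - b) / (1 + b) := div_pos (by linarith) (by linarith)
  have e1 : 1 + ENNReal.ofReal ((1 - b) / (1 + b)) = ENNReal.ofReal (2 / (1 + b)) := by
    rw [← ENNReal.ofReal_one, ← ENNReal.ofReal_add (by norm_num) hcpos.le]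
    congr 1
    have : 1 + b ≠ 0 := by linarith
    field_simp; ring
  have hc : 1 + ENNReal.ofReal ((1 - b) / (1 + b)) = (2 ^ (n+1)) ^ δ := by
    rw [e1, ← hpow, ← ENNReal.ofReal_rpow_of_pos (by positivity), ENNReal.ofReal_pow (by norm_num)]
    simp
  have hcβ : ENNReal.ofReal ((1 - b) / (1 + b)) *
      (1 - (1 + ENNReal.ofReal ((1 - b) / (1 + b))) * ENNReal.ofReal b)⁻¹ ≤ 1 := by
    rw [e1, ← ENNReal.ofReal_mul (by linarith), ← ENNReal.ofReal_one,
      ← ENNReal.ofReal_sub _ (mul_nonneg (by linarith) hb0)]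
    have : 1 - 2 / (1 + b) * b = (1 - b) / (1 + b) := by
      have : 1 + b ≠ 0 := by linarith
      field_simp; ring
    rw [this, ENNReal.mul_inv_cancel (by simpa using hcpos) (by simp), ENNReal.ofReal_one]
  refine ⟨1 + δ, by linarith, fun w hw hA => ?_⟩
  have hs0 : 0 < 1 + δ := by linarith
  have main : ∀ Q : Set (Fin n → ℝ), IsCube Q →
      (eavg Q fun x => w x ^ (1 + δ)) ^ (1 / (1 + δ)) ≤ 2 * eavg Q w := by
    intro Q hQ
    have h := main_bound hw hδ hc hcβ (fun P hP E hE hEm hv =>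
      ainf hw hp hA hM0 hMK hP hE hEm hv) hQ
    rw [one_div, ENNReal.rpow_inv_le_iff hs0]
    have hsum : eavg Q w ^ (1 + δ) = eavg Q w ^ δ * eavg Q w := by
      rw [add_comm, ENNReal.rpow_add_of_nonneg _ _ hδ.le zero_le_one, ENNReal.rpow_one]
    calc eavg Q (fun x => w x ^ (1 + δ)) ≤ 2 * (eavg Q w ^ δ * ∫⁻ x in Q, w x) / volume Q := by
          unfold eavg at h ⊢
          gcongr
      _ = 2 * eavg Q w ^ (1 + δ) := by
          rw [hsum]
          nth_rw 3 [eavg]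
          simp only [div_eq_mul_inv, mul_assoc]
      _ ≤ 2 ^ (1 + δ) * eavg Q w ^ (1 + δ) := by
          gcongr
          nth_rw 1 [← ENNReal.rpow_one 2]
          exact ENNReal.rpow_le_rpow_of_exponent_le (by norm_num) (by linarith)
      _ = _ := by rw [ENNReal.mul_rpow_of_nonneg _ _ hs0.le]
  refine ⟨main, ?_⟩
  refine lt_of_le_of_lt (b := 2) ?_ (by simp)
  exact iSup₂_le fun Q hQ => ENNReal.div_le_of_le_mul (main Q hQ)
end
end

section
/- Let 1 < p < ∞. If w ∈ A_p, then there exists ε with 0 < ε < p − 1 such that w ∈ A_{p−ε}. -/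
open MeasureTheory ENNReal
open scoped Classical

noncomputable section

variable {n : ℕ}

/-! ### Dyadic geometry of cubes -/

/-- The half-open cube with corner `a` and side `l`. -/
def hcube (a : Fin n → ℝ) (l : ℝ) : Set (Fin n → ℝ) := {x | ∀ i, a i ≤ x i ∧ x i < a i + l}

/-- Corner of the dyadic child indexed by `s`. -/
def chi (a : Fin n → ℝ) (l : ℝ) (s : Fin n → Bool) : Fin n → ℝ :=
  fun i => a i + if s i = true then l / 2 else 0

lemma hcube_eq_pi (a : Fin n → ℝ) (l : ℝ) :
    hcube a l = Set.pi Set.univ fun i => Set.Ico (a i) ((fun j => a j + l) i) := by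
  ext x; simp [hcube]

lemma hcube_meas (a : Fin n → ℝ) (l : ℝ) : MeasurableSet (hcube a l) := by
  rw [hcube_eq_pi]; exact MeasurableSet.univ_pi fun i => measurableSet_Ico

lemma hcube_vol (a : Fin n → ℝ) (l : ℝ) : volume (hcube a l) = ENNReal.ofReal l ^ n := by
  rw [hcube_eq_pi, Real.volume_pi_Ico]; simp

lemma hcube_vol_ne_zero (a : Fin n → ℝ) {l : ℝ} (hl : 0 < l) : volume (hcube a l) ≠ 0 := by
  rw [hcube_vol]; exact pow_ne_zero _ (by simpa using hl)

lemma hcube_vol_ne_top (a : Fin n → ℝ) (l : ℝ) : volume (hcube a l) ≠ ∞ := by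
  rw [hcube_vol]; exact ENNReal.pow_ne_top ENNReal.ofReal_ne_top

lemma isCube_hcube (a : Fin n → ℝ) {l : ℝ} (hl : 0 < l) : IsCube (hcube a l) := ⟨a, l, hl, rfl⟩

lemma chi_sub (a : Fin n → ℝ) {l : ℝ} (hl : 0 < l) (s : Fin n → Bool) :
    hcube (chi a l s) (l / 2) ⊆ hcube a l := by
  intro x hx i
  have := hx i
  simp only [chi] at this
  split_ifs at this <;> constructor <;> linarith [this.1, this.2]

lemma chi_disj (a : Fin n → ℝ) (l : ℝ) :
    Pairwise (Function.onFun Disjoint fun s : Fin n → Bool => hcube (chi a l s) (l / 2)) := by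
  intro s t hst
  rw [Function.onFun, Set.disjoint_left]
  intro x hx hy
  apply hst
  ext i
  have h1 := hx i
  have h2 := hy i
  simp only [chi] at h1 h2
  by_cases hs : s i = true <;> by_cases ht : t i = true <;> simp [hs, ht] at h1 h2 ⊢ <;> linarith

lemma chi_union (a : Fin n → ℝ) {l : ℝ} (hl : 0 < l) :
    hcube a l = ⋃ s, hcube (chi a l s) (l / 2) := by
  apply Set.Subset.antisymm
  · intro x hx
    refine Set.mem_iUnion.2 ⟨fun i => decide (a i + l / 2 ≤ x i), fun i => ?_⟩
    have := hx i
    by_cases h : a i + l / 2 ≤ x i <;> simp only [chi, h, decide_true, decide_false, if_true] <;>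
      simp <;> (try constructor) <;> linarith
  · exact Set.iUnion_subset fun s => chi_sub a hl s

variable (σ : (Fin n → ℝ) → ℝ≥0∞)

lemma eavg_mul_vol (a : Fin n → ℝ) {l : ℝ} (hl : 0 < l) :
    eavg (hcube a l) σ * volume (hcube a l) = ∫⁻ x in hcube a l, σ x :=
  ENNReal.div_mul_cancel (hcube_vol_ne_zero a hl) (hcube_vol_ne_top a l)

lemma eavg_chi_le (a : Fin n → ℝ) {l : ℝ} (hl : 0 < l) (s : Fin n → Bool) :
    eavg (hcube (chi a l s) (l / 2)) σ ≤ 2 ^ n * eavg (hcube a l) σ := by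
  have hv : volume (hcube a l) = 2 ^ n * volume (hcube (chi a l s) (l / 2)) := by
    rw [hcube_vol, hcube_vol, ← mul_pow]
    congr 1
    rw [show (2 : ℝ≥0∞) = ENNReal.ofReal 2 by simp, ← ENNReal.ofReal_mul (by norm_num)]
    congr 1; ring
  have hl2 : 0 < l / 2 := by linarith
  rw [eavg, ENNReal.div_le_iff (hcube_vol_ne_zero _ hl2) (hcube_vol_ne_top _ _)]
  calc ∫⁻ x in hcube (chi a l s) (l / 2), σ x ≤ ∫⁻ x in hcube a l, σ x :=
        lintegral_mono_set (chi_sub a hl s)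
    _ = eavg (hcube a l) σ * volume (hcube a l) := (eavg_mul_vol σ a hl).symm
    _ = _ := by rw [hv]; ring

/-- `r`-th powers of dyadic averages at generation `m`. -/
def dyf (r : ℝ) : ℕ → (Fin n → ℝ) → ℝ → (Fin n → ℝ) → ℝ≥0∞
  | 0, a, l => (hcube a l).indicator fun _ => eavg (hcube a l) σ ^ r
  | m + 1, a, l => fun x => ∑ s : Fin n → Bool, dyf r m (chi a l s) (l / 2) x

lemma dyf_meas (r : ℝ) (m : ℕ) : ∀ (a : Fin n → ℝ) (l : ℝ), Measurable (dyf σ r m a l) := by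
  induction m with
  | zero => intro a l; exact measurable_const.indicator (hcube_meas a l)
  | succ m ih => intro a l; exact Finset.measurable_sum _ fun s _ => ih _ _

lemma dyf_supp (r : ℝ) (m : ℕ) : ∀ (a : Fin n → ℝ) (l : ℝ), 0 < l → ∀ x ∉ hcube a l,
    dyf σ r m a l x = 0 := by
  induction m with
  | zero => intro a l _ x hx; exact Set.indicator_of_notMem hx _
  | succ m ih =>
    intro a l hl x hx
    exact Finset.sum_eq_zero fun s _ =>
      ih _ _ (by linarith) x fun h => hx (chi_sub a hl s h)

lemma dyf_eq (r : ℝ) (m : ℕ) : ∀ (a : Fin n → ℝ) (l : ℝ), 0 < l → ∀ x ∈ hcube a l,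
    ∃ b, x ∈ hcube b (l / 2 ^ m) ∧ hcube b (l / 2 ^ m) ⊆ hcube a l ∧
      dyf σ r m a l x = eavg (hcube b (l / 2 ^ m)) σ ^ r := by
  induction m with
  | zero => intro a l _ x hx; exact ⟨a, by simpa using hx, by simp, by simp [dyf, hx]⟩
  | succ m ih =>
    intro a l hl x hx
    have hx' := hx
    rw [chi_union a hl] at hx'
    obtain ⟨s, hs⟩ := Set.mem_iUnion.1 hx'
    obtain ⟨b, h1, h2, h3⟩ := ih (chi a l s) (l / 2) (by linarith) x hs
    have e : l / 2 ^ (m + 1) = l / 2 / 2 ^ m := by rw [pow_succ]; field_simp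
    rw [e]
    refine ⟨b, h1, h2.trans (chi_sub a hl s), ?_⟩
    rw [← h3]
    change ∑ s : Fin n → Bool, dyf σ r m (chi a l s) (l / 2) x = _
    refine Finset.sum_eq_single s (fun t _ hts => ?_) (by simp)
    exact dyf_supp σ r m _ _ (by linarith) x fun ht =>
      Set.disjoint_left.1 (chi_disj a l hts) ht hs

/-- Union of the stopping cubes up to generation `m` at level `t`. -/
def stopE (t : ℝ≥0∞) : ℕ → (Fin n → ℝ) → ℝ → Set (Fin n → ℝ)
  | 0, a, l => if t < eavg (hcube a l) σ then hcube a l else ∅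
  | m + 1, a, l => if t < eavg (hcube a l) σ then hcube a l else
      ⋃ s : Fin n → Bool, stopE t m (chi a l s) (l / 2)

lemma stopE_of_lt (t : ℝ≥0∞) (m : ℕ) (a : Fin n → ℝ) (l : ℝ) (h : t < eavg (hcube a l) σ) :
    stopE σ t m a l = hcube a l := by
  cases m <;> simp [stopE, h]

lemma stopE_succ (t : ℝ≥0∞) (m : ℕ) (a : Fin n → ℝ) (l : ℝ) (h : ¬ t < eavg (hcube a l) σ) :
    stopE σ t (m + 1) a l = ⋃ s : Fin n → Bool, stopE σ t m (chi a l s) (l / 2) := by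
  simp [stopE, h]

lemma stopE_meas (t : ℝ≥0∞) (m : ℕ) : ∀ (a : Fin n → ℝ) (l : ℝ),
    MeasurableSet (stopE σ t m a l) := by
  induction m with
  | zero => intro a l; rw [stopE]; split_ifs; exacts [hcube_meas a l, MeasurableSet.empty]
  | succ m ih =>
    intro a l; rw [stopE]; split_ifs
    exacts [hcube_meas a l, MeasurableSet.iUnion fun s => ih _ _]

lemma stopE_sub (t : ℝ≥0∞) (m : ℕ) : ∀ (a : Fin n → ℝ) (l : ℝ), 0 < l →
    stopE σ t m a l ⊆ hcube a l := by
  induction m with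
  | zero => intro a l _; rw [stopE]; split_ifs <;> simp
  | succ m ih =>
    intro a l hl; rw [stopE]; split_ifs
    · rfl
    · exact Set.iUnion_subset fun s => (ih _ _ (by linarith)).trans (chi_sub a hl s)

lemma stopE_int (t : ℝ≥0∞) (m : ℕ) (a : Fin n → ℝ) {l : ℝ} (hl : 0 < l) :
    ∫⁻ x in ⋃ s : Fin n → Bool, stopE σ t m (chi a l s) (l / 2), σ x =
      ∑ s : Fin n → Bool, ∫⁻ x in stopE σ t m (chi a l s) (l / 2), σ x := by
  rw [lintegral_iUnion (fun s => stopE_meas σ t m _ _), tsum_fintype]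
  intro s u hsu
  exact (chi_disj a l hsu).mono (stopE_sub σ t m _ _ (by linarith))
    (stopE_sub σ t m _ _ (by linarith))

lemma cube_int (a : Fin n → ℝ) {l : ℝ} (hl : 0 < l) :
    ∫⁻ x in hcube a l, σ x = ∑ s : Fin n → Bool, ∫⁻ x in hcube (chi a l s) (l / 2), σ x := by
  rw [chi_union a hl, lintegral_iUnion (fun s => hcube_meas _ _) (chi_disj a l), tsum_fintype]

lemma stopE_vol (t : ℝ≥0∞) (m : ℕ) : ∀ (a : Fin n → ℝ) (l : ℝ), 0 < l →
    t * volume (stopE σ t m a l) ≤ ∫⁻ x in stopE σ t m a l, σ x := by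
  have key : ∀ m (a : Fin n → ℝ) (l : ℝ), 0 < l → t < eavg (hcube a l) σ →
    t * volume (stopE σ t m a l) ≤ ∫⁻ x in stopE σ t m a l, σ x := by
    intro m a l hl h
    rw [stopE_of_lt σ t m a l h, ← eavg_mul_vol σ a hl]
    gcongr
  induction m with
  | zero =>
    intro a l hl
    by_cases h : t < eavg (hcube a l) σ
    · exact key _ a l hl h
    · simp [stopE, h]
  | succ m ih =>
    intro a l hl
    by_cases h : t < eavg (hcube a l) σ
    · exact key _ a l hl h
    · rw [stopE_succ σ t m a l h, stopE_int σ t m a hl]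
      calc t * volume (⋃ s : Fin n → Bool, stopE σ t m (chi a l s) (l / 2))
          ≤ t * ∑ s : Fin n → Bool, volume (stopE σ t m (chi a l s) (l / 2)) := by
            gcongr
            exact measure_iUnion_fintype_le _ _
        _ = ∑ s : Fin n → Bool, t * volume (stopE σ t m (chi a l s) (l / 2)) := Finset.mul_sum _ _ _
        _ ≤ _ := Finset.sum_le_sum fun s _ => ih _ _ (by linarith)

lemma dyf_zero_int (δ : ℝ) (hδ : 0 ≤ δ) (a : Fin n → ℝ) {l : ℝ} (hl : 0 < l) :
    ∫⁻ x, dyf σ (δ + 1) 0 a l x = eavg (hcube a l) σ ^ δ * ∫⁻ x in hcube a l, σ x := by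
  rw [dyf, lintegral_indicator (hcube_meas a l), lintegral_const, Measure.restrict_apply_univ,
    ENNReal.rpow_add_of_nonneg _ _ hδ zero_le_one, ENNReal.rpow_one, mul_assoc,
    eavg_mul_vol σ a hl]

lemma dyf_succ_int (r : ℝ) (m : ℕ) (a : Fin n → ℝ) (l : ℝ) :
    ∫⁻ x, dyf σ r (m + 1) a l x = ∑ s : Fin n → Bool, ∫⁻ x, dyf σ r m (chi a l s) (l / 2) x := by
  rw [← lintegral_finsetSum _ fun s _ => dyf_meas σ r m _ _]
  rfl

/-- The uniform bound at generation `m`. -/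
def bdd (δ : ℝ) (C : ℝ≥0∞) (m : ℕ) : Prop := ∀ (a : Fin n → ℝ) (l : ℝ), 0 < l →
  ∫⁻ x, dyf σ (δ + 1) m a l x ≤ C * (eavg (hcube a l) σ ^ δ * ∫⁻ x in hcube a l, σ x)

lemma stop_bound (δ : ℝ) (hδ : 0 ≤ δ) (C t : ℝ≥0∞) (M : ℕ) (hM : ∀ k < M, bdd σ δ C k) (m : ℕ) :
    ∀ (a : Fin n → ℝ) (l : ℝ), 0 < l → m ≤ M → (m < M ∨ eavg (hcube a l) σ ≤ t) →
    eavg (hcube a l) σ ≤ 2 ^ n * t →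
    ∫⁻ x, dyf σ (δ + 1) m a l x ≤ C * ((2 ^ n * t) ^ δ * ∫⁻ x in stopE σ t m a l, σ x)
      + t ^ δ * ∫⁻ x in hcube a l, σ x := by
  have key : ∀ m (a : Fin n → ℝ) (l : ℝ), 0 < l → (m < M ∨ eavg (hcube a l) σ ≤ t) →
    eavg (hcube a l) σ ≤ 2 ^ n * t → t < eavg (hcube a l) σ →
    ∫⁻ x, dyf σ (δ + 1) m a l x ≤ C * ((2 ^ n * t) ^ δ * ∫⁻ x in stopE σ t m a l, σ x)
      + t ^ δ * ∫⁻ x in hcube a l, σ x := by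
    intro m a l hl h1 h2 h
    have hm : m < M := h1.resolve_right (not_le.2 h)
    refine le_trans ?_ le_self_add
    rw [stopE_of_lt σ t m a l h]
    refine (hM m hm a l hl).trans ?_
    gcongr
  induction m with
  | zero =>
    intro a l hl _ h1 h2
    by_cases h : t < eavg (hcube a l) σ
    · exact key 0 a l hl h1 h2 h
    · rw [dyf_zero_int σ δ hδ a hl]
      refine le_trans ?_ le_add_self
      gcongr
      exact not_lt.1 h
  | succ m ih =>
    intro a l hl hm h1 h2
    by_cases h : t < eavg (hcube a l) σ
    · exact key _ a l hl h1 h2 h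
    · rw [dyf_succ_int, stopE_succ σ t m a l h, stopE_int σ t m a hl, cube_int σ a hl,
        Finset.mul_sum, Finset.mul_sum, Finset.mul_sum, ← Finset.sum_add_distrib]
      refine Finset.sum_le_sum fun s _ => ih _ _ (by linarith) (by omega) (Or.inl (by omega)) ?_
      refine (eavg_chi_le σ a hl s).trans ?_
      gcongr
      exact not_lt.1 h

lemma bdd_all (δ : ℝ) (hδ : 0 ≤ δ) (C β : ℝ≥0∞)
    (hC : C * ((2 ^ n * 2) ^ δ * β) + 2 ^ δ ≤ C)
    (hpos : ∀ (a : Fin n → ℝ) (l : ℝ), 0 < l → eavg (hcube a l) σ ≠ 0)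
    (hfin : ∀ (a : Fin n → ℝ) (l : ℝ), 0 < l → eavg (hcube a l) σ ≠ ∞)
    (hA : ∀ (a : Fin n → ℝ) (l : ℝ), 0 < l → ∀ E ⊆ hcube a l, MeasurableSet E →
      2 * volume E ≤ volume (hcube a l) → ∫⁻ x in E, σ x ≤ β * ∫⁻ x in hcube a l, σ x)
    (M : ℕ) : bdd σ δ C M := by
  induction M using Nat.strong_induction_on with
  | _ M ih =>
    intro a l hl
    set A := eavg (hcube a l) σ with hAdef
    have h1 : A ≤ 2 * A := by rw [two_mul]; exact le_self_add
    have h2 : A ≤ 2 ^ n * (2 * A) := h1.trans (le_mul_of_one_le_left' (one_le_pow₀ (by norm_num)))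
    refine (stop_bound σ δ hδ C (2 * A) M ih M a l hl le_rfl (Or.inr h1) h2).trans ?_
    have hv := stopE_vol σ (2 * A) M a l hl
    have hs := stopE_sub σ (2 * A) M a l hl
    have hE := hA a l hl _ hs (stopE_meas σ _ M a l) (by
      have := hv.trans (lintegral_mono_set hs)
      rw [← eavg_mul_vol σ a hl, ← hAdef, show ∀ v : ℝ≥0∞, 2 * A * v = A * (2 * v) from fun v => by ring] at this
      exact (ENNReal.mul_le_mul_iff_right (hpos a l hl) (hfin a l hl)).1 this)
    calc _ ≤ C * ((2 ^ n * (2 * A)) ^ δ * (β * ∫⁻ x in hcube a l, σ x))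
        + (2 * A) ^ δ * ∫⁻ x in hcube a l, σ x := by gcongr
      _ = (C * ((2 ^ n * 2) ^ δ * β) + 2 ^ δ) * (A ^ δ * ∫⁻ x in hcube a l, σ x) := by
        rw [← mul_assoc (2 ^ n) 2 A, ENNReal.mul_rpow_of_nonneg _ A hδ, ENNReal.mul_rpow_of_nonneg _ A hδ]
        ring
      _ ≤ _ := by gcongr

/-! ### Lebesgue differentiation and the reverse Hölder inequality -/

lemma hcube_ae_closedBall (b : Fin n → ℝ) {l : ℝ} (hl : 0 < l) :
    hcube b l =ᵐ[volume] Metric.closedBall (fun i => b i + l / 2) (l / 2) := by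
  have : Metric.closedBall (fun i => b i + l / 2) (l / 2) = Set.Icc b fun i => b i + l := by
    rw [closedBall_pi _ (by linarith), ← Set.pi_univ_Icc]
    congr 1; ext i x
    simp only [Real.closedBall_eq_Icc, Set.mem_Icc]
    constructor <;> rintro ⟨h1, h2⟩ <;> constructor <;> linarith
  rw [this, hcube_eq_pi]
  exact Measure.univ_pi_Ico_ae_eq_Icc

lemma rev_holder (hσ : Measurable σ) (δ : ℝ) (hδ : 0 ≤ δ) (C : ℝ≥0∞) (hb : ∀ M, bdd σ δ C M)
    (a : Fin n → ℝ) (l : ℝ) (hl : 0 < l) (hfin : ∫⁻ x in hcube a l, σ x ≠ ∞) :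
    ∫⁻ x in hcube a l, σ x ^ (δ + 1) ≤ C * (eavg (hcube a l) σ ^ δ * ∫⁻ x in hcube a l, σ x) := by
  have hd := (IsUnifLocDoublingMeasure.vitaliFamily
    (volume : Measure (Fin n → ℝ)) 1).ae_tendsto_lintegral_div'
    (hσ.indicator (hcube_meas a l)) (by rwa [lintegral_indicator (hcube_meas a l)])
  have hlim : ∀ᵐ x ∂(volume.restrict (hcube a l)),
      σ x ^ (δ + 1) = Filter.liminf (fun m => dyf σ (δ + 1) m a l x) Filter.atTop := by
    filter_upwards [ae_restrict_of_ae hd, ae_restrict_mem (hcube_meas a l)] with x hx hxQ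
    choose b hb1 hb2 hb3 using fun m => dyf_eq σ (δ + 1) m a l hl x hxQ
    have hpos : ∀ m : ℕ, 0 < l / 2 ^ m := fun m => by positivity
    have ht : Filter.Tendsto (fun m : ℕ => l / 2 ^ m / 2) Filter.atTop (nhdsWithin 0 (Set.Ioi 0)) := by
      refine tendsto_nhdsWithin_iff.2 ⟨?_, Filter.Eventually.of_forall fun m => ?_⟩
      · have := (tendsto_pow_atTop_nhds_zero_of_lt_one (r := (1/2 : ℝ)) (by norm_num)
          (by norm_num)).const_mul (l / 2)
        rw [mul_zero] at this
        refine this.congr fun m => ?_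
        rw [one_div, inv_pow]; field_simp
      · have := hpos m
        simp only [Set.mem_Ioi]; linarith
    have hball := IsUnifLocDoublingMeasure.tendsto_closedBall_filterAt
      (volume : Measure (Fin n → ℝ)) (K := 1) (x := x)
      (fun m i => b m i + l / 2 ^ m / 2) (fun m => l / 2 ^ m / 2) ht
      (Filter.Eventually.of_forall fun m => by
        rw [one_mul, closedBall_pi _ (by linarith [hpos m])]
        intro i _
        have := hb1 m i
        simp only [Real.closedBall_eq_Icc, Set.mem_Icc]
        constructor <;> linarith [this.1, this.2])
    have h1 := hx.comp hball
    rw [Set.indicator_of_mem hxQ] at h1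
    have h2 : Filter.Tendsto (fun m => dyf σ (δ + 1) m a l x) Filter.atTop
        (nhds (σ x ^ (δ + 1))) := by
      refine ((ENNReal.continuous_rpow_const.tendsto _).comp h1).congr fun m => ?_
      simp only [Function.comp]
      rw [hb3 m, eavg, setLIntegral_congr (hcube_ae_closedBall (b m) (hpos m)).symm,
        measure_congr (hcube_ae_closedBall (b m) (hpos m)).symm]
      congr 2
      exact setLIntegral_congr_fun (hcube_meas _ _)
        fun y hy => Set.indicator_of_mem (hb2 m hy) σ
    exact h2.liminf_eq.symm
  rw [lintegral_congr_ae hlim]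
  refine (lintegral_liminf_le fun m => dyf_meas σ _ m a l).trans ?_
  refine Filter.liminf_le_of_frequently_le' (Filter.Frequently.of_forall fun m => ?_)
  exact (setLIntegral_le_lintegral _ _).trans (hb m a l hl)

/-! ### Consequences of the `A_p` condition -/

lemma Ap_holder {p : ℝ} (hp : 1 < p) (w : (Fin n → ℝ) → ℝ≥0∞) (hw : IsWeight w)
    (F : Set (Fin n → ℝ)) :
    volume F ^ p ≤ (∫⁻ x in F, w x) * (∫⁻ x in F, w x ^ (-(1 / (p - 1)))) ^ (p - 1) := by
  obtain ⟨hm, hae, -⟩ := hw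
  have hp0 : 0 < p := by linarith
  have hp1 : 0 < p - 1 := by linarith
  have hpq : p.HolderConjugate (p / (p - 1)) := Real.HolderConjugate.conjExponent hp
  have h := ENNReal.lintegral_mul_le_Lp_mul_Lq (volume.restrict F) hpq
    (f := fun x => w x ^ (1 / p)) (g := fun x => w x ^ (-(1 / p)))
    (hm.pow_const _).aemeasurable (hm.pow_const _).aemeasurable
  have e1 : ∫⁻ x in F, ((fun x => w x ^ (1 / p)) * (fun x => w x ^ (-(1 / p)))) x = volume F := by
    rw [← setLIntegral_one]
    refine lintegral_congr_ae ?_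
    filter_upwards [ae_restrict_of_ae hae] with x hx
    simp only [Pi.mul_apply]
    rw [← ENNReal.rpow_add _ _ hx.1.ne' hx.2.ne]
    simp
  have e2 : ∫⁻ x in F, (w x ^ (1 / p)) ^ p = ∫⁻ x in F, w x := by
    refine lintegral_congr fun x => ?_
    rw [← ENNReal.rpow_mul, one_div_mul_cancel hp0.ne', ENNReal.rpow_one]
  have e3 : ∫⁻ x in F, (w x ^ (-(1 / p))) ^ (p / (p - 1))
      = ∫⁻ x in F, w x ^ (-(1 / (p - 1))) := by
    refine lintegral_congr fun x => ?_
    rw [← ENNReal.rpow_mul]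
    congr 1
    field_simp
  rw [e1, e2, e3] at h
  calc volume F ^ p ≤ _ := ENNReal.rpow_le_rpow h hp0.le
    _ = _ := by
      rw [ENNReal.mul_rpow_of_nonneg _ _ hp0.le, ← ENNReal.rpow_mul, ← ENNReal.rpow_mul,
        one_div_mul_cancel hp0.ne', ENNReal.rpow_one]
      congr 2
      field_simp

lemma Ap_const_le {p : ℝ} (hp : 1 < p) (w : (Fin n → ℝ) → ℝ≥0∞)
    (a : Fin n → ℝ) {l : ℝ} (hl : 0 < l) :
    eavg (hcube a l) w * (eavg (hcube a l) fun x => w x ^ (-(1 / (p - 1)))) ^ (p - 1)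
      ≤ ApConst p w := by
  have hp1 : p - 1 ≠ 0 := by linarith
  rw [ApConst, if_neg (by linarith)]
  have : 1 - p / (p - 1) = -(1 / (p - 1)) := by field_simp; ring
  rw [this]
  exact le_iSup₂ (f := fun (Q : Set (Fin n → ℝ)) (_ : IsCube Q) =>
    eavg Q w * (eavg Q fun x => w x ^ (-(1 / (p - 1)))) ^ (p - 1)) _ (isCube_hcube a hl)

lemma eavg_pos (f : (Fin n → ℝ) → ℝ≥0∞) (hf : Measurable f) (h : ∀ᵐ x, 0 < f x)
    (a : Fin n → ℝ) {l : ℝ} (hl : 0 < l) : eavg (hcube a l) f ≠ 0 := by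
  rw [eavg, Ne, ENNReal.div_eq_zero_iff, not_or]
  refine ⟨fun h0 => ?_, hcube_vol_ne_top a l⟩
  rw [lintegral_eq_zero_iff hf] at h0
  have : ∀ᵐ x ∂volume.restrict (hcube a l), False := by
    filter_upwards [h0, ae_restrict_of_ae h] with x h1 h2
    exact h2.ne' h1
  rw [Filter.eventually_false_iff_eq_bot, ae_eq_bot, Measure.restrict_eq_zero] at this
  exact hcube_vol_ne_zero a hl this

lemma sig_pos {p : ℝ} (hp : 1 < p) (w : (Fin n → ℝ) → ℝ≥0∞) (hw : IsWeight w)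
    (a : Fin n → ℝ) {l : ℝ} (hl : 0 < l) :
    eavg (hcube a l) (fun x => w x ^ (-(1 / (p - 1)))) ≠ 0 := by
  refine eavg_pos _ (hw.1.pow_const _) ?_ a hl
  filter_upwards [hw.2.1] with x hx
  exact ENNReal.rpow_pos hx.1 hx.2.ne

lemma sig_fin {p : ℝ} (hp : 1 < p) (w : (Fin n → ℝ) → ℝ≥0∞) (hw : IsWeight w)
    (hA : ApConst p w < ∞) (a : Fin n → ℝ) {l : ℝ} (hl : 0 < l) :
    eavg (hcube a l) (fun x => w x ^ (-(1 / (p - 1)))) ≠ ∞ := by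
  intro h
  have h1 := Ap_const_le hp w a hl
  have hp1 : 0 < p - 1 := by linarith
  have h2 : eavg (hcube a l) w ≠ 0 := eavg_pos w hw.1 (hw.2.1.mono fun x hx => hx.1) a hl
  rw [h, ENNReal.top_rpow_of_pos hp1, ENNReal.mul_top h2] at h1
  exact (h1.trans_lt hA).ne rfl

lemma Ap_half {p : ℝ} (hp : 1 < p) (w : (Fin n → ℝ) → ℝ≥0∞) (hw : IsWeight w)
    (hA : ApConst p w < ∞) (a : Fin n → ℝ) {l : ℝ} (hl : 0 < l) (F : Set (Fin n → ℝ))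
    (hF : F ⊆ hcube a l) (hv : volume (hcube a l) ≤ 2 * volume F) :
    ∫⁻ x in hcube a l, w x ^ (-(1 / (p - 1))) ≤
      (2 ^ p * ApConst p w) ^ (1 / (p - 1)) * ∫⁻ x in F, w x ^ (-(1 / (p - 1))) := by
  have hp0 : 0 < p := by linarith
  have hp1 : 0 < p - 1 := by linarith
  set V := volume (hcube a l) with hV
  have hV0 : V ≠ 0 := hcube_vol_ne_zero a hl
  have hVt : V ≠ ∞ := hcube_vol_ne_top a l
  set K := ApConst p w
  set sQ := ∫⁻ x in hcube a l, w x ^ (-(1 / (p - 1))) with hsQ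
  set sF := ∫⁻ x in F, w x ^ (-(1 / (p - 1)))
  set W := ∫⁻ x in hcube a l, w x with hW
  have h1 : volume F ^ p ≤ W * sF ^ (p - 1) := by
    refine (Ap_holder hp w hw F).trans ?_
    gcongr
    exact lintegral_mono_set hF
  have h2 : W * sQ ^ (p - 1) ≤ K * V ^ p := by
    have := Ap_const_le hp w a hl
    have e1 := eavg_mul_vol w a hl
    have e2 := eavg_mul_vol (fun x => w x ^ (-(1 / (p - 1)))) a hl
    rw [hW, hsQ, ← e1, ← e2, ENNReal.mul_rpow_of_nonneg _ _ hp1.le, ← hV]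
    have e3 : V ^ p = V * V ^ (p - 1) := by
      conv_rhs => rw [← ENNReal.rpow_one V, ← ENNReal.rpow_mul, one_mul,
        ← ENNReal.rpow_add _ _ hV0 hVt]
      congr 1; ring
    rw [e3]
    calc _ = (eavg (hcube a l) w * (eavg (hcube a l) fun x => w x ^ (-(1 / (p - 1)))) ^ (p - 1))
        * (V * V ^ (p - 1)) := by ring
      _ ≤ _ := by gcongr
  have h3 : V ^ p * sQ ^ (p - 1) ≤ V ^ p * (2 ^ p * K * sF ^ (p - 1)) := by
    calc V ^ p * sQ ^ (p - 1) ≤ (2 * volume F) ^ p * sQ ^ (p - 1) := by gcongr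
      _ = 2 ^ p * volume F ^ p * sQ ^ (p - 1) := by rw [ENNReal.mul_rpow_of_nonneg _ _ hp0.le]
      _ ≤ 2 ^ p * (W * sF ^ (p - 1)) * sQ ^ (p - 1) := by gcongr
      _ = 2 ^ p * sF ^ (p - 1) * (W * sQ ^ (p - 1)) := by ring
      _ ≤ 2 ^ p * sF ^ (p - 1) * (K * V ^ p) := by gcongr
      _ = _ := by ring
  have h4 : sQ ^ (p - 1) ≤ 2 ^ p * K * sF ^ (p - 1) :=
    (ENNReal.mul_le_mul_iff_right (by simp [ENNReal.rpow_eq_zero_iff, hV0, hVt])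
      (ENNReal.rpow_ne_top_of_nonneg hp0.le hVt)).1 h3
  have h5 := ENNReal.rpow_le_rpow h4 (z := 1 / (p - 1)) (by positivity)
  rwa [ENNReal.mul_rpow_of_nonneg _ _ (by positivity), ← ENNReal.rpow_mul, ← ENNReal.rpow_mul,
    mul_one_div_cancel hp1.ne', ENNReal.rpow_one, ENNReal.rpow_one] at h5

lemma Ap_Ainfty {p : ℝ} (hp : 1 < p) (w : (Fin n → ℝ) → ℝ≥0∞) (hw : IsWeight w)
    (hA : ApConst p w < ∞) : ∃ β : ℝ, 0 ≤ β ∧ β < 1 ∧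
    ∀ (a : Fin n → ℝ) (l : ℝ), 0 < l → ∀ E ⊆ hcube a l, MeasurableSet E →
      2 * volume E ≤ volume (hcube a l) → ∫⁻ x in E, w x ^ (-(1 / (p - 1))) ≤
        ENNReal.ofReal β * ∫⁻ x in hcube a l, w x ^ (-(1 / (p - 1))) := by
  have hp0 : 0 < p := by linarith
  have hp1 : 0 < p - 1 := by linarith
  set D := (2 ^ p * ApConst p w) ^ (1 / (p - 1)) with hD
  have hDt : D ≠ ∞ := ENNReal.rpow_ne_top_of_nonneg (by positivity)
    (ENNReal.mul_ne_top (ENNReal.rpow_ne_top_of_nonneg hp0.le (by simp)) hA.ne)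
  set d : ℝ := D.toReal + 1 with hd
  have hd1 : 1 ≤ d := by have := D.toReal_nonneg; linarith
  refine ⟨1 - 1 / d, ?_, ?_, ?_⟩
  · have : 1 / d ≤ 1 := by rw [div_le_one (by linarith)]; exact hd1
    linarith
  · have : 0 < 1 / d := by positivity
    linarith
  intro a l hl E hE hEm hEv
  have hEt : volume E ≠ ∞ := ((measure_mono hE).trans_lt (hcube_vol_ne_top a l).lt_top).ne
  have hvF : volume (hcube a l) ≤ 2 * volume (hcube a l \ E) := by
    have h1 : volume E + volume (hcube a l \ E) = volume (hcube a l) := by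
      rw [← measure_inter_add_diff (hcube a l) hEm, Set.inter_eq_right.2 hE]
    have h2 : volume E ≤ volume (hcube a l \ E) := by
      rw [← h1, two_mul] at hEv
      exact (ENNReal.add_le_add_iff_left hEt).1 hEv
    rw [← h1, two_mul]
    gcongr
  have hh := Ap_half hp w hw hA a hl _ Set.diff_subset hvF
  rw [← hD] at hh
  have hsum := lintegral_inter_add_diff (μ := volume)
    (fun x => w x ^ (-(1 / (p - 1)))) (hcube a l) hEm
  rw [Set.inter_eq_right.2 hE] at hsum
  have hfin : ∫⁻ x in hcube a l, w x ^ (-(1 / (p - 1))) ≠ ∞ := by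
    rw [← eavg_mul_vol _ a hl]
    exact ENNReal.mul_ne_top (sig_fin hp w hw hA a hl) (hcube_vol_ne_top a l)
  set sQ := ∫⁻ x in hcube a l, w x ^ (-(1 / (p - 1)))
  set sE := ∫⁻ x in E, w x ^ (-(1 / (p - 1)))
  set sF := ∫⁻ x in hcube a l \ E, w x ^ (-(1 / (p - 1)))
  have hEt' : sE ≠ ∞ := fun h => hfin (by rw [← hsum, h, top_add])
  have hFt' : sF ≠ ∞ := fun h => hfin (by rw [← hsum, h, add_top])
  have r1 : sE.toReal + sF.toReal = sQ.toReal := by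
    rw [← hsum, ENNReal.toReal_add hEt' hFt']
  have r2 : sQ.toReal ≤ D.toReal * sF.toReal := by
    rw [← ENNReal.toReal_mul]
    exact ENNReal.toReal_mono (ENNReal.mul_ne_top hDt hFt') hh
  have r3 : sQ.toReal ≤ d * sF.toReal := by
    have := sF.toReal_nonneg
    rw [hd]; nlinarith
  have r4 : 1 / d * sQ.toReal ≤ sF.toReal := by
    rw [one_div, inv_mul_le_iff₀ (by linarith)]; exact r3
  rw [← ENNReal.ofReal_toReal hEt', ← ENNReal.ofReal_toReal hfin,
    ← ENNReal.ofReal_mul (by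
      have : 1 / d ≤ 1 := by rw [div_le_one (by linarith)]; exact hd1
      linarith)]
  apply ENNReal.ofReal_le_ofReal
  linarith

lemma choose_delta (n : ℕ) (β : ℝ) (hβ0 : 0 ≤ β) (hβ : β < 1) : ∃ δ : ℝ, 0 < δ ∧
    ∃ C : ℝ≥0∞, C ≠ ∞ ∧ C * (((2 : ℝ≥0∞) ^ n * 2) ^ δ * ENNReal.ofReal β) + 2 ^ δ ≤ C := by
  have hb : (0 : ℝ) < 2 ^ n * 2 := by positivity
  have hc : Filter.Tendsto (fun δ : ℝ => ((2 : ℝ) ^ n * 2) ^ δ * β) (nhdsWithin 0 (Set.Ioi 0))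
      (nhds β) := by
    have : Continuous fun δ : ℝ => ((2 : ℝ) ^ n * 2) ^ δ * β :=
      (Real.continuous_const_rpow hb.ne').mul continuous_const
    have := this.tendsto 0
    simp only [Real.rpow_zero, one_mul] at this
    exact this.mono_left nhdsWithin_le_nhds
  obtain ⟨δ, h1, h2⟩ := ((hc.eventually_lt_const hβ).and self_mem_nhdsWithin).exists
  have h2 : 0 < δ := h2
  refine ⟨δ, h2, ENNReal.ofReal (2 ^ δ / (1 - ((2 : ℝ) ^ n * 2) ^ δ * β)), ENNReal.ofReal_ne_top, ?_⟩
  have e1 : ((2 : ℝ≥0∞) ^ n * 2) ^ δ = ENNReal.ofReal (((2 : ℝ) ^ n * 2) ^ δ) := by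
    rw [← ENNReal.ofReal_rpow_of_pos hb]
    congr 1
    rw [ENNReal.ofReal_mul (by positivity), ENNReal.ofReal_pow (by norm_num)]
    simp
  have e2 : (2 : ℝ≥0∞) ^ δ = ENNReal.ofReal (2 ^ δ) := by
    rw [← ENNReal.ofReal_rpow_of_pos (by norm_num)]; simp
  have hpos : 0 < 1 - ((2 : ℝ) ^ n * 2) ^ δ * β := by linarith
  rw [e1, e2, ← ENNReal.ofReal_mul (by positivity), ← ENNReal.ofReal_mul (by positivity),
    ← ENNReal.ofReal_add (by positivity) (by positivity)]
  apply ENNReal.ofReal_le_ofReal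
  apply le_of_eq
  field_simp
  ring

/-- If `1 < p < ∞` and `w ∈ A_p`, then there exists `0 < ε < p - 1`
such that `w ∈ A_{p-ε}`. -/
theorem statement4 (n : ℕ) (p : ℝ) (hp : 1 < p) (w : (Fin n → ℝ) → ℝ≥0∞)
    (hw : IsWeight w) (hwp : MemAp p w) :
    ∃ ε : ℝ, 0 < ε ∧ ε < p - 1 ∧ MemAp (p - ε) w := by
  have hp1 : 0 < p - 1 := by linarith
  obtain ⟨β, hβ0, hβ1, hβ⟩ := Ap_Ainfty hp w hw hwp
  obtain ⟨δ, hδ, C, hC, hC'⟩ := choose_delta n β hβ0 hβ1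
  have hq : p - (p - 1) * δ / (1 + δ) - 1 = (p - 1) / (1 + δ) := by field_simp; ring
  have hq0 : 0 < (p - 1) / (1 + δ) := by positivity
  refine ⟨(p - 1) * δ / (1 + δ), by positivity, by linarith, ?_⟩
  set q := p - (p - 1) * δ / (1 + δ) with hqdef
  have hexp : 1 - q / (q - 1) = -(1 / (p - 1)) * (δ + 1) := by
    have hq' : q = 1 + (p - 1) / (1 + δ) := by linarith
    rw [hq, hq']
    field_simp
    ring
  set σ : (Fin n → ℝ) → ℝ≥0∞ := fun x => w x ^ (-(1 / (p - 1))) with hσ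
  have hσm : Measurable σ := hw.1.pow_const _
  have hfin : ∀ (a : Fin n → ℝ) (l : ℝ), 0 < l → eavg (hcube a l) σ ≠ ∞ :=
    fun a l hl => sig_fin hp w hw hwp a hl
  have hb := bdd_all σ δ hδ.le C (ENNReal.ofReal β) hC'
    (fun a l hl => sig_pos hp w hw a hl) hfin hβ
  refine lt_of_le_of_lt (b := C ^ (q - 1) * ApConst p w) ?_
    (ENNReal.mul_lt_top (ENNReal.rpow_lt_top_of_nonneg (by linarith) hC) hwp)
  rw [ApConst, if_neg (by linarith)]
  refine iSup₂_le fun Q hQ => ?_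
  obtain ⟨a, l, hl, rfl⟩ := hQ
  change eavg (hcube a l) w * (eavg (hcube a l) fun x => w x ^ (1 - q / (q - 1))) ^ (q - 1) ≤ _
  have hI : ∫⁻ x in hcube a l, σ x ≠ ∞ := by
    rw [← eavg_mul_vol _ a hl]
    exact ENNReal.mul_ne_top (hfin a l hl) (hcube_vol_ne_top a l)
  have hrh := rev_holder σ hσm δ hδ.le C hb a l hl hI
  have h1 : (eavg (hcube a l) fun x => w x ^ (1 - q / (q - 1)))
      ≤ C * eavg (hcube a l) σ ^ (δ + 1) := by
    rw [eavg, ENNReal.div_le_iff (hcube_vol_ne_zero _ hl) (hcube_vol_ne_top _ _)]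
    have : ∀ x, w x ^ (1 - q / (q - 1)) = σ x ^ (δ + 1) := fun x => by
      rw [hexp, ENNReal.rpow_mul]
    simp only [this]
    refine hrh.trans (le_of_eq ?_)
    rw [← eavg_mul_vol σ a hl, ENNReal.rpow_add_of_nonneg _ _ hδ.le zero_le_one,
      ENNReal.rpow_one]
    ring
  calc eavg (hcube a l) w * (eavg (hcube a l) fun x => w x ^ (1 - q / (q - 1))) ^ (q - 1)
      ≤ eavg (hcube a l) w * (C * eavg (hcube a l) σ ^ (δ + 1)) ^ (q - 1) := by
        gcongr
        linarith
    _ = C ^ (q - 1) * (eavg (hcube a l) w * eavg (hcube a l) σ ^ (p - 1)) := by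
        rw [ENNReal.mul_rpow_of_nonneg _ _ (by linarith), ← ENNReal.rpow_mul]
        have : (δ + 1) * (q - 1) = p - 1 := by rw [hq]; field_simp; ring
        rw [this]; ring
    _ ≤ _ := by
        gcongr
        exact Ap_const_le hp w a hl
end
end

section
/- (Jones factorization theorem.) Let 1 < p < ∞. A weight w belongs to A_p if and only if there exist weights w₁, w₂ ∈ A_1 such that w = w₁ w₂^{1−p}. -/
open MeasureTheory ENNReal
open scoped Classical

noncomputable section

variable {n : ℕ}

open Metric

/-- Dyadic-radius centred ball average. -/
def bavg (μ : Measure (Fin n → ℝ)) (g : (Fin n → ℝ) → ℝ≥0∞) (x : Fin n → ℝ) (k : ℤ) : ℝ≥0∞ :=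
  (∫⁻ y in closedBall x ((2:ℝ) ^ k), g y ∂μ) / μ (closedBall x ((2:ℝ) ^ k))

/-- Centred maximal function with dyadic radii. -/
def MM (μ : Measure (Fin n → ℝ)) (g : (Fin n → ℝ) → ℝ≥0∞) (x : Fin n → ℝ) : ℝ≥0∞ :=
  ⨆ k : ℤ, bavg μ g x k

lemma measurable_setlint (μ : Measure (Fin n → ℝ)) [SFinite μ] {g : (Fin n → ℝ) → ℝ≥0∞}
    (hg : Measurable g) (r : ℝ) : Measurable fun x => ∫⁻ y in closedBall x r, g y ∂μ := by
  have hs : MeasurableSet {z : (Fin n → ℝ) × (Fin n → ℝ) | dist z.2 z.1 ≤ r} :=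
    (isClosed_le (by fun_prop) continuous_const).measurableSet
  have h1 : Measurable (Set.indicator {z : (Fin n → ℝ) × (Fin n → ℝ) | dist z.2 z.1 ≤ r}
      (fun z => g z.2)) := (hg.comp measurable_snd).indicator hs
  have h2 := h1.lintegral_prod_right' (ν := μ)
  convert h2 using 2 with x
  rw [← lintegral_indicator measurableSet_closedBall]
  rfl

lemma measurable_MM (μ : Measure (Fin n → ℝ)) [SFinite μ] {g : (Fin n → ℝ) → ℝ≥0∞}
    (hg : Measurable g) : Measurable (MM μ g) := by
  refine Measurable.iSup fun k => ?_
  refine (measurable_setlint μ hg _).div ?_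
  have := measurable_setlint μ (g := fun _ => 1) measurable_const ((2:ℝ)^k)
  simpa using this

lemma MM_congr (μ : Measure (Fin n → ℝ)) {g g' : (Fin n → ℝ) → ℝ≥0∞} (h : g =ᵐ[μ] g') :
    MM μ g = MM μ g' := by
  funext x
  refine iSup_congr fun k => ?_
  unfold bavg
  rw [lintegral_congr_ae (ae_restrict_of_ae h)]

lemma MM_iSup (μ : Measure (Fin n → ℝ)) {g : ℕ → (Fin n → ℝ) → ℝ≥0∞}
    (hg : ∀ i, Measurable (g i)) (hm : Monotone g) (x : Fin n → ℝ) :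
    MM μ (fun x => ⨆ i, g i x) x = ⨆ i, MM μ (g i) x := by
  unfold MM bavg
  rw [iSup_comm]
  refine iSup_congr fun k => ?_
  rw [lintegral_iSup hg hm, ENNReal.iSup_div]

/-- The Besicovitch weak type bound. -/
lemma weak_bound (n : ℕ) : ∃ N : ℕ, ∀ (μ : Measure (Fin n → ℝ)) (g : (Fin n → ℝ) → ℝ≥0∞)
    (t : ℝ≥0∞), t * μ {x | t < MM μ g x} ≤ N * ∫⁻ x, g x ∂μ := by
  obtain ⟨N, τ, hτ, hN⟩ := HasBesicovitchCovering.no_satelliteConfig (α := Fin n → ℝ)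
  refine ⟨N, fun μ g t => ?_⟩
  have key : ∀ K : ℕ, t * μ {x | ∃ k : ℤ, k ≤ K ∧ t < bavg μ g x k} ≤ N * ∫⁻ x, g x ∂μ := by
    intro K
    set E := {x | ∃ k : ℤ, k ≤ K ∧ t < bavg μ g x k} with hE
    choose! κ hκ1 hκ2 using (fun (x : Fin n → ℝ) (hx : x ∈ E) => hx)
    let q : Besicovitch.BallPackage E (Fin n → ℝ) :=
      { c := fun x => x
        r := fun x => (2:ℝ) ^ (κ x)
        rpos := fun x => by positivity
        r_bound := (2:ℝ) ^ (K : ℤ)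
        r_le := fun x => zpow_le_zpow_right₀ (by norm_num) (hκ1 x x.2) }
    obtain ⟨s, hs1, hs2⟩ := Besicovitch.exist_disjoint_covering_families hτ hN q
    have hcount : ∀ i, (s i).Countable := fun i =>
      (hs1 i).countable_of_nonempty_interior fun x _ =>
        ⟨x, ball_subset_interior_closedBall (mem_ball_self (q.rpos x))⟩
    have hsub : E ⊆ ⋃ i, ⋃ j ∈ s i, closedBall (q.c j) (q.r j) := by
      intro x hx
      have := hs2 ⟨⟨x, hx⟩, rfl⟩
      simp only [Set.mem_iUnion] at this ⊢
      obtain ⟨i, j, hj, h⟩ := this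
      exact ⟨i, j, hj, ball_subset_closedBall h⟩
    calc t * μ E ≤ t * ∑ i, ∑' j : s i, μ (closedBall (q.c j) (q.r j)) := by
          gcongr
          refine (measure_mono hsub).trans ((measure_iUnion_fintype_le _ _).trans ?_)
          gcongr with i
          exact measure_biUnion_le μ (hcount i) _
      _ = ∑ i, ∑' j : s i, t * μ (closedBall (q.c j) (q.r j)) := by
          rw [Finset.mul_sum]
          simp_rw [ENNReal.tsum_mul_left]
      _ ≤ ∑ i, ∑' j : s i, ∫⁻ y in closedBall (q.c j) (q.r j), g y ∂μ := by
          gcongr with i _ j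
          exact ENNReal.mul_le_of_le_div (hκ2 j.1 j.1.2).le
      _ = ∑ i, ∫⁻ y in ⋃ j ∈ s i, closedBall (q.c j) (q.r j), g y ∂μ := by
          congr 1 with i
          rw [lintegral_biUnion (hcount i) (fun _ _ => measurableSet_closedBall) (hs1 i)]
      _ ≤ ∑ i : Fin N, ∫⁻ y, g y ∂μ := by
          exact Finset.sum_le_sum fun i _ => setLIntegral_le_lintegral _ _
      _ = _ := by simp
  have hU : {x | t < MM μ g x} = ⋃ K : ℕ, {x | ∃ k : ℤ, k ≤ K ∧ t < bavg μ g x k} := by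
    ext x
    simp only [MM, Set.mem_ofPred_eq, lt_iSup_iff, Set.mem_iUnion]
    constructor
    · rintro ⟨k, hk⟩
      exact ⟨k.toNat, k, Int.self_le_toNat k, hk⟩
    · rintro ⟨_, k, _, hk⟩
      exact ⟨k, hk⟩
  rw [hU, Monotone.measure_iUnion, ENNReal.mul_iSup]
  · exact iSup_le key
  · intro a b hab x hx
    obtain ⟨k, hk, h⟩ := hx
    exact ⟨k, hk.trans (by exact_mod_cast hab), h⟩

lemma weak_bound2 (n : ℕ) : ∃ N : ℕ, ∀ (μ : Measure (Fin n → ℝ)) (g : (Fin n → ℝ) → ℝ≥0∞)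
    (_ : Measurable g) (t : ℝ≥0∞),
    t * μ {x | 2 * t < MM μ g x} ≤ N * ∫⁻ x, Set.indicator {y | t < g y} g x ∂μ := by
  obtain ⟨N, hN⟩ := weak_bound n
  refine ⟨N, fun μ g hg t => le_trans ?_ (hN μ (Set.indicator {y | t < g y} g) t)⟩
  refine mul_le_mul_right (measure_mono fun x hx => ?_) t
  have hx : 2 * t < MM μ g x := hx
  by_contra hcon
  have hcon : MM μ (Set.indicator {y | t < g y} g) x ≤ t := not_lt.1 hcon
  refine absurd hx (not_lt.2 (iSup_le fun k => ?_))
  have h1 : bavg μ (Set.indicator {y | t < g y} g) x k ≤ t := (le_iSup _ k).trans hcon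
  unfold bavg at *
  set B := closedBall x ((2:ℝ)^k)
  calc (∫⁻ y in B, g y ∂μ) / μ B
      ≤ (∫⁻ y in B, (Set.indicator {y | t < g y} g y + t) ∂μ) / μ B := by
        gcongr with y
        by_cases h : t < g y
        · simp [Set.indicator, h]
        · simpa [Set.indicator, h] using not_lt.1 h
    _ = (∫⁻ y in B, Set.indicator {y | t < g y} g y ∂μ) / μ B + t * (μ B / μ B) := by
        rw [lintegral_add_right _ measurable_const, ENNReal.add_div, setLIntegral_const, mul_div_assoc]
    _ ≤ t + t * 1 := by
        gcongr
        exact ENNReal.div_self_le_one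
    _ = 2 * t := by ring

lemma layer1 {q : ℝ} (hq : 1 < q) (a : ℝ≥0∞) :
    a ^ q ≤ ∑' k : ℤ, (if (2:ℝ≥0∞) ^ k < a then ((2:ℝ≥0∞) ^ (k + 1)) ^ q else 0) := by
  have fin : ∀ b : ℝ≥0∞, b ≠ ∞ → b ≤ a → 
      b ^ q ≤ ∑' k : ℤ, (if (2:ℝ≥0∞) ^ k < a then ((2:ℝ≥0∞) ^ (k + 1)) ^ q else 0) := by
    intro b hb hba
    by_cases h0 : b = 0
    · rw [h0, ENNReal.zero_rpow_of_pos (by linarith)]; exact zero_le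
    obtain ⟨k, hk1, hk2⟩ := ENNReal.exists_mem_Ioc_zpow h0 hb (y := 2) (by norm_num) (by norm_num)
    refine le_trans ?_ (ENNReal.le_tsum k)
    rw [if_pos (hk1.trans_le hba)]
    gcongr
  by_cases ha : a = ∞
  · have : ∑' k : ℤ, (if (2:ℝ≥0∞) ^ k < a then ((2:ℝ≥0∞) ^ (k + 1)) ^ q else 0) = ∞ := by
      refine ENNReal.eq_top_of_forall_nnreal_le fun r => ?_
      have := fin ((r ^ (1/q) : NNReal)) (by simp) (by simp [ha])
      refine le_trans (le_of_eq ?_) this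
      rw [ENNReal.coe_rpow_of_nonneg _ (by positivity), ← ENNReal.rpow_mul]
      field_simp
      simp
    rw [this]; exact le_top
  · exact fin a ha le_rfl

lemma layer2 {s : ℝ} (hs : 0 < s) : ∃ C : ℝ≥0∞, C ≠ ∞ ∧ ∀ a : ℝ≥0∞, a ≠ ∞ → 
    ∑' k : ℤ, (if (2:ℝ≥0∞) ^ k < a then ((2:ℝ≥0∞) ^ k) ^ s else 0) ≤ C * a ^ s := by
  have hr : ((2:ℝ≥0∞)⁻¹) ^ s < 1 := ENNReal.rpow_lt_one (by norm_num) hs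
  refine ⟨(1 - ((2:ℝ≥0∞)⁻¹) ^ s)⁻¹, ?_, fun a ha => ?_⟩
  · simpa [tsub_eq_zero_iff_le] using hr
  by_cases h0 : a = 0
  · simp [h0]
  obtain ⟨m, hm1, hm2⟩ := ENNReal.exists_mem_Ioc_zpow h0 ha (y := 2) (by norm_num) (by norm_num)
  have hinj : Function.Injective (fun j : ℕ => m - (j : ℤ)) := by
    intro i j h; simpa using h
  rw [← hinj.tsum_eq]
  · calc _ ≤ ∑' j : ℕ, a ^ s * (((2:ℝ≥0∞)⁻¹) ^ s) ^ j := by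
          gcongr with j
          split_ifs
          · have : (2:ℝ≥0∞) ^ (m - (j:ℤ)) = 2 ^ m * (2⁻¹) ^ j := by
              rw [ENNReal.zpow_sub (by norm_num) (by norm_num), zpow_natCast, ENNReal.inv_pow]
            rw [this, ENNReal.mul_rpow_of_nonneg _ _ hs.le, ← ENNReal.rpow_natCast, 
              ← ENNReal.rpow_natCast, ← ENNReal.rpow_mul, ← ENNReal.rpow_mul, mul_comm s]
            gcongr
          · exact zero_le
      _ = _ := by rw [ENNReal.tsum_mul_left, ENNReal.tsum_geometric, mul_comm]
  · intro k hk
    simp only [Function.mem_support, ne_eq, ite_eq_right_iff, Classical.not_imp] at hk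
    have : (2:ℝ≥0∞) ^ k < 2 ^ (m+1) := hk.1.trans_le hm2
    have hkm : k < m + 1 := by
      by_contra hc
      exact absurd this (not_lt.2 (ENNReal.zpow_le_of_le (by norm_num) (not_lt.1 hc)))
    exact ⟨(m - k).toNat, by simp; omega⟩

lemma strong_bound (n : ℕ) {q : ℝ} (hq : 1 < q) : ∃ C : ℝ≥0∞, C ≠ ∞ ∧ 
    ∀ (μ : Measure (Fin n → ℝ)) [SFinite μ] (g : (Fin n → ℝ) → ℝ≥0∞) (_ : Measurable g),
    ∫⁻ x, MM μ g x ^ q ∂μ ≤ C * ∫⁻ x, g x ^ q ∂μ := by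
  obtain ⟨N, hN⟩ := weak_bound2 n
  obtain ⟨C, hC, hC2⟩ := layer2 (s := q - 1) (by linarith)
  refine ⟨4 ^ q * (N + 1) * (C + 1), by finiteness, fun μ _ g hg => ?_⟩
  have hM := measurable_MM μ hg
  -- pointwise bound for g
  have hpt : ∀ a : ℝ≥0∞, ∑' k : ℤ, (if (2:ℝ≥0∞) ^ k < a then ((2:ℝ≥0∞) ^ k) ^ (q - 1) else 0) * a
      ≤ (C + 1) * a ^ q := by
    intro a
    by_cases ha : a = ∞
    · rw [ha, ENNReal.top_rpow_of_pos (by linarith), ENNReal.mul_top (by simp)]; exact le_top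
    rw [ENNReal.tsum_mul_right]
    calc _ ≤ (C * a ^ (q-1)) * a := by gcongr; exact hC2 a ha
      _ = C * a ^ q := by
        by_cases h0 : a = 0
        · simp [h0, ENNReal.zero_rpow_of_pos (by linarith : 0 < q)]
        conv_lhs => rw [mul_assoc]; arg 2; arg 2; rw [← ENNReal.rpow_one a]
        rw [← ENNReal.rpow_add _ _ h0 ha]; simp
      _ ≤ _ := by gcongr; exact le_self_add
  have hterm : ∀ k : ℤ, ((2:ℝ≥0∞) ^ (k + 1)) ^ q * μ {x | (2:ℝ≥0∞) ^ k < MM μ g x}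
      ≤ 4 ^ q * (N + 1) * ∫⁻ x, (if (2:ℝ≥0∞) ^ (k-1) < g x then ((2:ℝ≥0∞) ^ (k-1)) ^ (q - 1) else 0) * g x ∂μ := by
    intro k
    set t : ℝ≥0∞ := 2 ^ (k-1) with ht
    have ht0 : t ≠ 0 := (ENNReal.zpow_pos (by norm_num) (by norm_num) _).ne'
    have htt : t ≠ ∞ := (ENNReal.zpow_lt_top (by norm_num) (by norm_num) _).ne
    have e1 : (2:ℝ≥0∞) ^ k = 2 * t := by
      have : k = 1 + (k-1) := by ring
      rw [ht]; conv_lhs => rw [this]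
      rw [ENNReal.zpow_add (by norm_num) (by norm_num)]; simp
    have e2 : (2:ℝ≥0∞) ^ (k+1) = 4 * t := by
      have : k + 1 = 2 + (k-1) := by ring
      rw [ht, this, ENNReal.zpow_add (by norm_num) (by norm_num)]
      norm_num
    rw [e1, e2, ENNReal.mul_rpow_of_nonneg _ _ (by linarith)]
    have e3 : t ^ q = t ^ (q-1) * t := by
      conv_rhs => arg 2; rw [← ENNReal.rpow_one t]
      rw [← ENNReal.rpow_add _ _ ht0 htt]; simp
    have e4 : ∫⁻ x, (if t < g x then t ^ (q - 1) else 0) * g x ∂μ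
        = t ^ (q-1) * ∫⁻ x, Set.indicator {y | t < g y} g x ∂μ := by
      rw [← lintegral_const_mul _ (hg.indicator (measurableSet_lt measurable_const hg))]
      congr 1 with x
      by_cases h : t < g x <;> simp [Set.indicator, h]
    rw [e4, e3]
    calc _ = 4 ^ q * t ^ (q-1) * (t * μ {x | 2 * t < MM μ g x}) := by ring
      _ ≤ 4 ^ q * t ^ (q-1) * ((N + 1) * ∫⁻ x, Set.indicator {y | t < g y} g x ∂μ) := by
        refine mul_le_mul_right ((hN μ g hg t).trans ?_) _
        gcongr; exact le_self_add
      _ = _ := by ring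
  calc ∫⁻ x, MM μ g x ^ q ∂μ 
      ≤ ∫⁻ x, ∑' k : ℤ, (if (2:ℝ≥0∞) ^ k < MM μ g x then ((2:ℝ≥0∞) ^ (k + 1)) ^ q else 0) ∂μ :=
        lintegral_mono fun x => layer1 hq _
    _ = ∑' k : ℤ, ((2:ℝ≥0∞) ^ (k + 1)) ^ q * μ {x | (2:ℝ≥0∞) ^ k < MM μ g x} := by
        rw [lintegral_tsum]
        · congr 1 with k
          rw [← setLIntegral_const, ← lintegral_indicator (measurableSet_lt measurable_const hM)]
          congr 1 with x
          by_cases h : (2:ℝ≥0∞) ^ k < MM μ g x <;> simp [Set.indicator, h]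
        · intro k
          exact (Measurable.ite (measurableSet_lt measurable_const hM) measurable_const
            measurable_const).aemeasurable
    _ ≤ ∑' k : ℤ, 4 ^ q * (N + 1) * ∫⁻ x, (if (2:ℝ≥0∞) ^ (k-1) < g x then ((2:ℝ≥0∞) ^ (k-1)) ^ (q - 1) else 0) * g x ∂μ := 
        ENNReal.tsum_le_tsum hterm
    _ = 4 ^ q * (N + 1) * ∑' k : ℤ, ∫⁻ x, (if (2:ℝ≥0∞) ^ k < g x then ((2:ℝ≥0∞) ^ k) ^ (q - 1) else 0) * g x ∂μ := by
        rw [ENNReal.tsum_mul_left]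
        congr 1
        exact (Equiv.subRight (1:ℤ)).tsum_eq (fun k : ℤ => ∫⁻ x, (if (2:ℝ≥0∞) ^ k < g x then ((2:ℝ≥0∞) ^ k) ^ (q - 1) else 0) * g x ∂μ)
    _ = 4 ^ q * (N + 1) * ∫⁻ x, ∑' k : ℤ, (if (2:ℝ≥0∞) ^ k < g x then ((2:ℝ≥0∞) ^ k) ^ (q - 1) else 0) * g x ∂μ := by
        rw [lintegral_tsum]
        intro k
        exact ((Measurable.ite (measurableSet_lt measurable_const hg) measurable_const
            measurable_const).mul hg).aemeasurable
    _ ≤ 4 ^ q * (N + 1) * ∫⁻ x, (C + 1) * g x ^ q ∂μ := by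
        gcongr with x; exact hpt _
    _ = _ := by rw [lintegral_const_mul _ (hg.pow_const q)]; ring

lemma mdiv {f g : (Fin n → ℝ) → ℝ≥0∞} (hf : Measurable f) (hg : Measurable g) :
    Measurable fun x => f x / g x := hf.div hg

lemma mdivpow {f g : (Fin n → ℝ) → ℝ≥0∞} (hf : Measurable f) (hg : Measurable g) (s : ℝ) :
    Measurable fun x => (f x / g x) ^ s := (hf.div hg).pow_const s

/-- A dual pair of `A_p` weights, with the condition tested on balls. -/
structure DualPair (p : ℝ) (w σ : (Fin n → ℝ) → ℝ≥0∞) : Prop where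
  mw : Measurable w
  ms : Measurable σ
  pos : ∀ᵐ x, 0 < w x ∧ w x < ∞
  hs : ∀ᵐ x, σ x = w x ^ (1 - p / (p - 1))
  fw : ∀ x r, 0 < r → ∫⁻ y in closedBall x r, w y < ∞
  fs : ∀ x r, 0 < r → ∫⁻ y in closedBall x r, σ y < ∞
  bd : ∃ K : ℝ≥0∞, K ≠ ∞ ∧ ∀ x r, 0 < r →
    (∫⁻ y in closedBall x r, w y) * (∫⁻ y in closedBall x r, σ y) ^ (p - 1)
      ≤ K * volume (closedBall x r) ^ p

lemma rpow_pos_fin {a : ℝ≥0∞} (h : 0 < a ∧ a < ∞) (s : ℝ) : 0 < a ^ s ∧ a ^ s < ∞ :=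
  ⟨ENNReal.rpow_pos h.1 h.2.ne, (ENNReal.rpow_ne_top_of_ne_zero h.1.ne' h.2.ne).lt_top⟩

lemma DualPair.symm {p : ℝ} (hp : 1 < p) {w σ : (Fin n → ℝ) → ℝ≥0∞} (h : DualPair p w σ) :
    DualPair (p / (p - 1)) σ w := by
  have hp1 : 0 < p - 1 := by linarith
  refine ⟨h.ms, h.mw, ?_, ?_, h.fs, h.fw, ?_⟩
  · filter_upwards [h.pos, h.hs] with x h1 h2
    rw [h2]; exact rpow_pos_fin h1 _
  · filter_upwards [h.pos, h.hs] with x h1 h2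
    rw [h2, ← ENNReal.rpow_mul]
    conv_lhs => rw [← ENNReal.rpow_one (w x)]
    congr 1
    have : p / (p-1) - 1 = 1 / (p-1) := by field_simp; ring
    rw [this]; field_simp; ring
  · obtain ⟨K, hK, hb⟩ := h.bd
    refine ⟨K ^ (1 / (p - 1)), by finiteness, fun x r hr => ?_⟩
    have := ENNReal.rpow_le_rpow (hb x r hr) (z := 1 / (p - 1)) (by positivity)
    rw [ENNReal.mul_rpow_of_nonneg _ _ (by positivity), ENNReal.mul_rpow_of_nonneg _ _ (by positivity),
      ← ENNReal.rpow_mul, ← ENNReal.rpow_mul] at this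
    have e1 : (p - 1) * (1 / (p - 1)) = 1 := by field_simp
    have e2 : p / (p-1) - 1 = 1 / (p-1) := by field_simp; ring
    have e3 : p * (1 / (p - 1)) = p / (p - 1) := by ring
    rw [e1, e3, ENNReal.rpow_one] at this
    rw [e2, mul_comm]; exact this

lemma vol_closedBall_pos (x : Fin n → ℝ) {r : ℝ} (hr : 0 < r) :
    0 < volume (closedBall x r) ∧ volume (closedBall x r) < ∞ :=
  ⟨measure_closedBall_pos _ _ hr, measure_closedBall_lt_top⟩

lemma setLIntegral_pos_of_ae {w : (Fin n → ℝ) → ℝ≥0∞} (mw : Measurable w)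
    (pos : ∀ᵐ x, 0 < w x) {s : Set (Fin n → ℝ)} (hs : 0 < volume s) : 0 < ∫⁻ x in s, w x := by
  rw [lintegral_pos_iff_support mw]
  have : Function.support w =ᵐ[volume.restrict s] Set.univ := by
    filter_upwards [ae_restrict_of_ae pos] with x hx
    exact eq_true (show w x ≠ 0 from hx.ne')
  rw [measure_congr this]
  simpa using hs

lemma lerner_pt {p : ℝ} (hp : 1 < p) {w σ : (Fin n → ℝ) → ℝ≥0∞} (h : DualPair p w σ) :
    ∃ K : ℝ≥0∞, K ≠ ∞ ∧ ∀ f : (Fin n → ℝ) → ℝ≥0∞, Measurable f → ∀ x,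
      MM volume f x ^ (p - 1) ≤ K * MM (volume.withDensity w)
        (fun y => MM (volume.withDensity σ) (fun z => f z / σ z) y ^ (p - 1) / w y) x := by
  have hp1 : 0 < p - 1 := by linarith
  obtain ⟨K, hK, hb⟩ := h.bd
  have sym := h.symm hp
  refine ⟨K * ((4:ℝ≥0∞) ^ n) ^ p, by finiteness, fun f hf x => ?_⟩
  set H := MM (volume.withDensity σ) (fun z => f z / σ z) with hH
  have mH : Measurable H := measurable_MM _ (mdiv hf h.ms)
  set R := MM (volume.withDensity w) (fun y => H y ^ (p - 1) / w y) x with hR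
  suffices hh : ∀ k, bavg volume f x k ^ (p - 1) ≤ K * ((4:ℝ≥0∞) ^ n) ^ p * R by
    rw [← ENNReal.le_rpow_inv_iff hp1]
    refine iSup_le fun k => ?_
    rw [ENNReal.le_rpow_inv_iff hp1]; exact hh k
  intro k
  have h2k : (0:ℝ) < 2 ^ k := by positivity
  have e1 : (2:ℝ) ^ (k+1) = 2 ^ k * 2 := by rw [zpow_add₀ (by norm_num)]; simp
  set B := closedBall x ((2:ℝ)^k) with hB
  set B4 := closedBall x (4 * (2:ℝ)^k) with hB4
  have hBB4 : B ⊆ B4 := closedBall_subset_closedBall (by linarith)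
  set I := ∫⁻ y in B, f y
  set S4 := ∫⁻ y in B4, σ y
  set W := ∫⁻ y in B, w y with hW
  set V := volume B with hV
  have V0 := vol_closedBall_pos x h2k
  have W0 : 0 < W := setLIntegral_pos_of_ae h.mw (h.pos.mono fun _ h => h.1) V0.1
  have Wt : W < ∞ := h.fw _ _ h2k
  have S0 : 0 < S4 := setLIntegral_pos_of_ae h.ms (sym.pos.mono fun _ h => h.1) 
    (vol_closedBall_pos x (by positivity)).1
  have St : S4 < ∞ := h.fs _ _ (by positivity)
  have V4 : volume B4 = 4 ^ n * V := by
    rw [hV, hB, hB4, Real.volume_pi_closedBall _ (by positivity), Real.volume_pi_closedBall _ h2k.le]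
    rw [show (4:ℝ≥0∞) ^ n = ENNReal.ofReal (4 ^ n) by
      rw [ENNReal.ofReal_pow (by norm_num)]; norm_num, ← ENNReal.ofReal_mul (by positivity), Fintype.card_fin n,
      ← mul_pow]
    ring_nf
  have hm : ∀ y ∈ B, I / S4 ≤ H y := by
    intro y hy
    refine le_trans ?_ (le_iSup _ (k+1))
    unfold bavg
    have s1 : B ⊆ closedBall y ((2:ℝ)^(k+1)) := by
      refine closedBall_subset_closedBall' ?_
      have := mem_closedBall.1 hy
      rw [dist_comm] at this
      linarith
    have s2 : closedBall y ((2:ℝ)^(k+1)) ⊆ B4 := by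
      refine closedBall_subset_closedBall' ?_
      have := mem_closedBall.1 hy
      linarith
    refine ENNReal.div_le_div ?_ ?_
    · rw [setLIntegral_withDensity_eq_setLIntegral_mul _ h.ms (mdiv hf h.ms) measurableSet_closedBall]
      calc I ≤ ∫⁻ z in closedBall y ((2:ℝ)^(k+1)), f z := lintegral_mono_set s1
        _ = _ := by
          refine lintegral_congr_ae (ae_restrict_of_ae ?_)
          filter_upwards [sym.pos] with z hz
          exact (ENNReal.mul_div_cancel hz.1.ne' hz.2.ne).symm
    · rw [withDensity_apply _ measurableSet_closedBall]
      exact lintegral_mono_set s2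
  have hWS : S4 ^ (p - 1) * W ≤ K * ((4:ℝ≥0∞) ^ n) ^ p * V ^ p := by
    calc S4 ^ (p - 1) * W ≤ S4 ^ (p-1) * ∫⁻ y in B4, w y := by
          gcongr
          exact lintegral_mono_set hBB4
      _ ≤ K * volume B4 ^ p := by rw [mul_comm]; exact hb x _ (by positivity)
      _ = _ := by rw [V4, ENNReal.mul_rpow_of_nonneg _ _ (by linarith), mul_assoc]
  have hlow : V * (I / S4) ^ (p - 1) ≤ ∫⁻ y in B, H y ^ (p - 1) := by
    rw [mul_comm, ← setLIntegral_const]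
    exact setLIntegral_mono (mH.pow_const _) fun y hy => ENNReal.rpow_le_rpow (hm y hy) hp1.le
  have hR2 : (∫⁻ y in B, H y ^ (p - 1)) / W ≤ R := by
    refine le_trans (le_of_eq ?_) (le_iSup _ k)
    unfold bavg
    rw [withDensity_apply _ measurableSet_closedBall, 
      setLIntegral_withDensity_eq_setLIntegral_mul _ h.mw (mdiv (mH.pow_const _) h.mw) measurableSet_closedBall]
    congr 1
    refine lintegral_congr_ae (ae_restrict_of_ae ?_)
    filter_upwards [h.pos] with z hz
    exact (ENNReal.mul_div_cancel hz.1.ne' hz.2.ne).symm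
  calc bavg volume f x k ^ (p - 1) = (I / V) ^ (p-1) := rfl
    _ ≤ K * ((4:ℝ≥0∞) ^ n) ^ p * ((∫⁻ y in B, H y ^ (p - 1)) / W) := by
      rw [← mul_div_assoc, ENNReal.le_div_iff_mul_le (Or.inl W0.ne') (Or.inl Wt.ne)]
      have eI : I = (I / S4) * S4 := (ENNReal.div_mul_cancel S0.ne' St.ne).symm
      have eV : V ^ p * (V⁻¹) ^ (p - 1) = V := by
        rw [ENNReal.inv_rpow, ← ENNReal.rpow_neg, ← ENNReal.rpow_add _ _ V0.1.ne' V0.2.ne]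
        simp [hV, hB]
      calc (I / V) ^ (p-1) * W = (I/S4) ^ (p-1) * (V⁻¹) ^ (p-1) * (S4 ^ (p-1) * W) := by
            conv_lhs => rw [eI, div_eq_mul_inv]
            rw [ENNReal.mul_rpow_of_nonneg _ _ hp1.le, ENNReal.mul_rpow_of_nonneg _ _ hp1.le]
            ring
        _ ≤ (I/S4) ^ (p-1) * (V⁻¹) ^ (p-1) * (K * ((4:ℝ≥0∞) ^ n) ^ p * V ^ p) := by gcongr
        _ = K * ((4:ℝ≥0∞) ^ n) ^ p * ((V ^ p * (V⁻¹) ^ (p - 1)) * (I/S4) ^ (p-1)) := by ring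
        _ ≤ _ := by rw [eV]; gcongr
    _ ≤ _ := by gcongr

/-- The Muckenhoupt theorem, with the proof of Lerner. -/
lemma muckenhoupt {p : ℝ} (hp : 1 < p) {w σ : (Fin n → ℝ) → ℝ≥0∞} (h : DualPair p w σ) :
    ∃ C : ℝ≥0∞, C ≠ ∞ ∧ ∀ f : (Fin n → ℝ) → ℝ≥0∞, Measurable f → 
      ∫⁻ x, w x * MM volume f x ^ p ≤ C * ∫⁻ x, w x * f x ^ p := by
  have hp1 : 0 < p - 1 := by linarith
  have hp' : 1 < p / (p - 1) := by rw [lt_div_iff₀ hp1]; linarith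
  have hpc : (p - 1) * (p / (p - 1)) = p := by field_simp
  have sym := h.symm hp
  obtain ⟨K, hK, hpt⟩ := lerner_pt hp h
  obtain ⟨C1, hC1, h1⟩ := strong_bound n hp'
  obtain ⟨C2, hC2, h2⟩ := strong_bound n hp
  have hKt : K ^ (p / (p-1)) ≠ ∞ := by
    exact ENNReal.rpow_ne_top_of_nonneg (by linarith) hK
  refine ⟨K ^ (p / (p-1)) * C1 * C2, by finiteness, fun f hf => ?_⟩
  set H := MM (volume.withDensity σ) (fun z => f z / σ z) with hH
  have mH : Measurable H := measurable_MM _ (mdiv hf h.ms)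
  set g := fun y => H y ^ (p - 1) / w y with hg
  have mg : Measurable g := (mH.pow_const _).div h.mw
  have mG : Measurable (MM (volume.withDensity w) g) := measurable_MM _ mg
  calc ∫⁻ x, w x * MM volume f x ^ p 
      ≤ ∫⁻ x, K ^ (p / (p-1)) * (w x * MM (volume.withDensity w) g x ^ (p / (p-1))) := by
        refine lintegral_mono fun x => ?_
        have := ENNReal.rpow_le_rpow (hpt f hf x) (z := p / (p-1)) (by linarith)
        rw [← ENNReal.rpow_mul, hpc, ENNReal.mul_rpow_of_nonneg _ _ (by linarith)] at this
        calc _ ≤ _ := mul_le_mul_right this (w x)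
          _ = _ := by ring
    _ = K ^ (p / (p-1)) * ∫⁻ x, MM (volume.withDensity w) g x ^ (p / (p-1)) ∂(volume.withDensity w) := by
        rw [lintegral_const_mul _ (show Measurable fun x => w x * MM (volume.withDensity w) g x ^ (p / (p-1)) from h.mw.mul (mG.pow_const _)), 
          lintegral_withDensity_eq_lintegral_mul _ h.mw (mG.pow_const _)]
        rfl
    _ ≤ K ^ (p / (p-1)) * (C1 * ∫⁻ x, g x ^ (p / (p-1)) ∂(volume.withDensity w)) := by
        gcongr; exact h1 _ g mg
    _ = K ^ (p / (p-1)) * (C1 * ∫⁻ x, H x ^ p ∂(volume.withDensity σ)) := by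
        rw [lintegral_withDensity_eq_lintegral_mul _ h.mw (mg.pow_const _),
          lintegral_withDensity_eq_lintegral_mul _ h.ms (mH.pow_const _)]
        congr 2
        refine lintegral_congr_ae ?_
        filter_upwards [h.pos, h.hs] with x hx hs
        simp only [Pi.mul_apply, hg]
        rw [div_eq_mul_inv, ENNReal.mul_rpow_of_nonneg _ _ (by linarith), ← ENNReal.rpow_mul, hpc, hs,
          ENNReal.inv_rpow, ← ENNReal.rpow_neg, mul_comm (H x ^ p), ← mul_assoc]
        congr 1
        conv_lhs => arg 1; rw [← ENNReal.rpow_one (w x)]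
        rw [← ENNReal.rpow_add _ _ hx.1.ne' hx.2.ne, ← sub_eq_add_neg]
    _ ≤ K ^ (p / (p-1)) * (C1 * (C2 * ∫⁻ x, (f x / σ x) ^ p ∂(volume.withDensity σ))) := by
        gcongr; exact h2 _ _ (mdiv hf h.ms)
    _ = K ^ (p / (p-1)) * (C1 * (C2 * ∫⁻ x, w x * f x ^ p)) := by
        rw [lintegral_withDensity_eq_lintegral_mul _ h.ms (mdivpow hf h.ms _)]
        congr 3
        refine lintegral_congr_ae ?_
        filter_upwards [sym.pos, sym.hs] with x hx hs
        simp only [Pi.mul_apply]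
        rw [div_eq_mul_inv, ENNReal.mul_rpow_of_nonneg _ _ (by linarith), hs,
          ENNReal.inv_rpow, ← ENNReal.rpow_neg, mul_comm (f x ^ p), ← mul_assoc]
        congr 1
        conv_lhs => arg 1; rw [← ENNReal.rpow_one (σ x)]
        rw [← ENNReal.rpow_add _ _ hx.1.ne' hx.2.ne]
        congr 1
        have : p / (p-1) - 1 = 1 / (p-1) := by field_simp; ring
        rw [this]; field_simp; ring
    _ = _ := by ring

/-- The `L¹` form of the maximal operator. -/
def TT (p : ℝ) (w F : (Fin n → ℝ) → ℝ≥0∞) (x : Fin n → ℝ) : ℝ≥0∞ :=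
  w x * MM volume (fun y => (F y / w y) ^ (1 / p)) x ^ p

lemma TT_bound {p : ℝ} (hp : 1 < p) {w σ : (Fin n → ℝ) → ℝ≥0∞} (h : DualPair p w σ) :
    ∃ C : ℝ≥0∞, C ≠ ∞ ∧ ∀ F : (Fin n → ℝ) → ℝ≥0∞, Measurable F → 
      ∫⁻ x, TT p w F x ≤ C * ∫⁻ x, F x := by
  obtain ⟨C, hC, hb⟩ := muckenhoupt hp h
  refine ⟨C, hC, fun F hF => (hb _ (mdivpow hF h.mw _)).trans (le_of_eq ?_)⟩
  congr 1
  refine lintegral_congr_ae ?_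
  filter_upwards [h.pos] with x hx
  rw [← ENNReal.rpow_mul, one_div_mul_cancel (by linarith), ENNReal.rpow_one,
    ENNReal.mul_div_cancel hx.1.ne' hx.2.ne]

lemma TT_meas {p : ℝ} {w : (Fin n → ℝ) → ℝ≥0∞} (hw : Measurable w) 
    (F : (Fin n → ℝ) → ℝ≥0∞) (hF : Measurable F) : Measurable (TT p w F) :=
  hw.mul ((measurable_MM _ ((hF.div hw).pow_const _)).pow_const _)

lemma rpow_iSup' {s : ℝ} (hs : 0 < s) (a : ℕ → ℝ≥0∞) : (⨆ i, a i) ^ s = ⨆ i, a i ^ s :=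
  (ENNReal.orderIsoRpow s hs).map_iSup a

lemma MM_mono (μ : Measure (Fin n → ℝ)) {g g' : (Fin n → ℝ) → ℝ≥0∞} (h : g ≤ g') :
    MM μ g ≤ MM μ g' := by
  intro x
  refine iSup_mono fun k => ?_
  unfold bavg
  gcongr with y
  exact h y

lemma TT_mono {p : ℝ} (hp : 1 < p) (w : (Fin n → ℝ) → ℝ≥0∞) : Monotone (TT p w) := by
  intro F G hFG x
  unfold TT
  have : MM volume (fun y => (F y / w y) ^ (1 / p)) x ≤ MM volume (fun y => (G y / w y) ^ (1 / p)) x := by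
    refine MM_mono _ (fun y => ?_) x
    have := hFG y
    dsimp only
    gcongr
  gcongr

lemma TT_iSup {p : ℝ} (hp : 1 < p) {w : (Fin n → ℝ) → ℝ≥0∞} (hw : Measurable w) 
    (F : ℕ → (Fin n → ℝ) → ℝ≥0∞) (hF : ∀ i, Measurable (F i)) (hm : Monotone F) (x) :
    TT p w (fun x => ⨆ i, F i x) x = ⨆ i, TT p w (F i) x := by
  unfold TT
  simp_rw [ENNReal.iSup_div, rpow_iSup' (by positivity : 0 < 1 / p)]
  rw [MM_iSup, rpow_iSup' (by linarith), ENNReal.mul_iSup]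
  · intro i; exact ((hF i).div hw).pow_const _
  · intro i j hij y
    have := hm hij y
    dsimp only
    gcongr

lemma rubio (T : ((Fin n → ℝ) → ℝ≥0∞) → ((Fin n → ℝ) → ℝ≥0∞)) (hmono : Monotone T)
    (hmeas : ∀ F, Measurable F → Measurable (T F))
    (hsup : ∀ F : ℕ → (Fin n → ℝ) → ℝ≥0∞, (∀ i, Measurable (F i)) → Monotone F → ∀ x,
      T (fun x => ⨆ i, F i x) x ≤ ⨆ i, T (F i) x)
    {C : ℝ≥0∞} (hC : C ≠ ∞) (hb : ∀ F, Measurable F → ∫⁻ x, T F x ≤ C * ∫⁻ x, F x) :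
    ∃ F : (Fin n → ℝ) → ℝ≥0∞, Measurable F ∧ (∀ x, 0 < F x) ∧ ∫⁻ x, F x < ∞ ∧
      ∃ D : ℝ≥0∞, D ≠ ∞ ∧ ∀ x, T F x ≤ D * F x := by
  obtain ⟨g, g0, gm, gi⟩ := exists_pos_lintegral_lt_of_sigmaFinite
    (volume : Measure (Fin n → ℝ)) (ε := 1) one_ne_zero
  set G : (Fin n → ℝ) → ℝ≥0∞ := fun x => g x with hG
  have mG : Measurable G := gm.coe_nnreal_ennreal
  set D : ℝ≥0∞ := 2 * (C + 1) with hD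
  have D0 : D ≠ 0 := by simp [hD]
  have Dt : D ≠ ∞ := by finiteness
  set F : ℕ → (Fin n → ℝ) → ℝ≥0∞ := fun i => 
    Nat.rec (fun _ => 0) (fun _ H => fun x => G x + D⁻¹ * T H x) i with hF
  have F0 : F 0 = fun _ => 0 := rfl
  have FS : ∀ i, F (i+1) = fun x => G x + D⁻¹ * T (F i) x := fun i => rfl
  clear_value F
  have mF : ∀ i, Measurable (F i) := by
    intro i
    induction i with
    | zero => rw [F0]; exact measurable_const
    | succ i ih => rw [FS]; exact mG.add ((hmeas _ ih).const_mul _)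
  have moF : Monotone F := by
    refine monotone_nat_of_le_succ fun i => ?_
    induction i with
    | zero => rw [F0]; intro x; exact zero_le
    | succ i ih =>
      rw [FS, FS (i+1)]
      intro x
      have := hmono ih x
      dsimp only
      gcongr
  have hI : ∀ i, ∫⁻ x, F i x ≤ 2 := by
    intro i
    induction i with
    | zero => simp [F0]
    | succ i ih =>
      rw [FS]
      rw [lintegral_add_left mG, lintegral_const_mul _ (hmeas _ (mF i))]
      calc _ ≤ 1 + D⁻¹ * (C * 2) := by
            gcongr
            exact (hb _ (mF i)).trans (by gcongr)
        _ ≤ 1 + D⁻¹ * D := by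
            gcongr
            rw [hD, mul_comm]; gcongr; exact le_self_add
        _ = 2 := by rw [ENNReal.inv_mul_cancel D0 Dt]; norm_num
  refine ⟨fun x => ⨆ i, F i x, Measurable.iSup mF, fun x => ?_, ?_, D, Dt, fun x => ?_⟩
  · refine lt_of_lt_of_le ?_ (le_iSup _ 1)
    rw [FS]
    exact lt_of_lt_of_le (ENNReal.coe_pos.2 (g0 x)) le_self_add
  · rw [lintegral_iSup mF moF]
    exact (iSup_le hI).trans_lt (by norm_num)
  · refine (hsup F mF moF x).trans (iSup_le fun i => ?_)
    calc T (F i) x = D * (D⁻¹ * T (F i) x) := by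
          rw [← mul_assoc, ENNReal.mul_inv_cancel D0 Dt, one_mul]
      _ ≤ D * F (i+1) x := by rw [FS]; gcongr; exact le_add_self
      _ ≤ _ := by gcongr; exact le_iSup (fun i => F i x) (i+1)

lemma cube_vol {Q : Set (Fin n → ℝ)} (hQ : IsCube Q) :
    0 < volume Q ∧ volume Q < ∞ ∧ MeasurableSet Q := by
  obtain ⟨a, l, hl, rfl⟩ := hQ
  have e : {x : Fin n → ℝ | ∀ i, a i ≤ x i ∧ x i < a i + l}
      = Set.pi Set.univ fun i => Set.Ico (a i) (a i + l) := by
    ext x; simp [Set.mem_pi]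
  rw [e]
  refine ⟨?_, ?_, MeasurableSet.univ_pi fun i => measurableSet_Ico⟩
  · rw [Real.volume_pi_Ico, pos_iff_ne_zero, Finset.prod_ne_zero_iff]
    intro i _
    simpa using hl
  · rw [Real.volume_pi_Ico]
    simp

lemma cube_vol_eq (a : Fin n → ℝ) {l : ℝ} (hl : 0 < l) :
    volume {x : Fin n → ℝ | ∀ i, a i ≤ x i ∧ x i < a i + l} = ENNReal.ofReal (l ^ n) := by
  have e : {x : Fin n → ℝ | ∀ i, a i ≤ x i ∧ x i < a i + l}
      = Set.pi Set.univ fun i => Set.Ico (a i) (a i + l) := by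
    ext x; simp [Set.mem_pi]
  rw [e, Real.volume_pi_Ico]
  simp [ENNReal.ofReal_pow hl.le]

lemma cube_ball {Q : Set (Fin n → ℝ)} (hQ : IsCube Q) {x : Fin n → ℝ} (hx : x ∈ Q) :
    ∃ k : ℤ, Q ⊆ closedBall x ((2:ℝ)^k) ∧ volume (closedBall x ((2:ℝ)^k)) ≤ 4 ^ n * volume Q := by
  obtain ⟨a, l, hl, rfl⟩ := hQ
  obtain ⟨j, hj1, hj2⟩ := exists_mem_Ioc_zpow hl (one_lt_two)
  refine ⟨j + 1, fun y hy => ?_, ?_⟩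
  · rw [mem_closedBall, dist_pi_le_iff (by positivity)]
    intro i
    have h1 := hx i
    have h2 := hy i
    rw [Real.dist_eq, abs_le]
    constructor <;> linarith
  · rw [cube_vol_eq a hl, Real.volume_pi_closedBall _ (by positivity), Fintype.card_fin,
      show (4:ℝ≥0∞) ^ n = ENNReal.ofReal (4 ^ n) by
        rw [ENNReal.ofReal_pow (by norm_num)]; norm_num, ← ENNReal.ofReal_mul (by positivity), ← mul_pow]
    refine ENNReal.ofReal_le_ofReal (pow_le_pow_left₀ (by positivity) ?_ _)
    rw [zpow_add₀ (by norm_num)]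
    simp
    linarith

lemma ball_cube (x : Fin n → ℝ) {r : ℝ} (hr : 0 < r) :
    ∃ Q : Set (Fin n → ℝ), IsCube Q ∧ closedBall x r ⊆ Q ∧ 
      volume Q ≤ 2 ^ n * volume (closedBall x r) := by
  refine ⟨_, ⟨fun i => x i - r, 4 * r, by positivity, rfl⟩, fun y hy i => ?_, ?_⟩
  · rw [mem_closedBall, dist_pi_le_iff hr.le] at hy
    have := hy i
    rw [Real.dist_eq, abs_le] at this
    constructor <;> linarith
  · rw [cube_vol_eq _ (by positivity), Real.volume_pi_closedBall _ hr.le, Fintype.card_fin,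
      show (2:ℝ≥0∞) ^ n = ENNReal.ofReal (2 ^ n) by
        rw [ENNReal.ofReal_pow (by norm_num)]; norm_num, ← ENNReal.ofReal_mul (by positivity), ← mul_pow]
    refine le_of_eq ?_
    ring_nf

lemma A1_of_MM {v : (Fin n → ℝ) → ℝ≥0∞} (mv : Measurable v) (pos : ∀ᵐ x, 0 < v x ∧ v x < ∞)
    {C : ℝ≥0∞} (hC : C ≠ ∞) (hM : ∀ᵐ x, MM volume v x ≤ C * v x) : IsWeight v ∧ MemAp 1 v := by
  have key : ∀ Q : Set (Fin n → ℝ), IsCube Q → ∀ x ∈ Q, eavg Q v ≤ 4 ^ n * MM volume v x := by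
    intro Q hQ x hx
    obtain ⟨k, h1, h2⟩ := cube_ball hQ hx
    obtain ⟨q0, qt, qm⟩ := cube_vol hQ
    have b0 := vol_closedBall_pos x (show (0:ℝ) < 2 ^ k by positivity)
    refine le_trans ?_ (mul_le_mul_right (le_iSup _ k) _)
    unfold eavg bavg
    rw [ENNReal.div_le_iff q0.ne' qt.ne]
    set B := closedBall x ((2:ℝ)^k)
    calc ∫⁻ y in Q, v y ≤ ∫⁻ y in B, v y := lintegral_mono_set h1
      _ = ((∫⁻ y in B, v y) / volume B) * volume B := (ENNReal.div_mul_cancel b0.1.ne' b0.2.ne).symm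
      _ ≤ ((∫⁻ y in B, v y) / volume B) * (4 ^ n * volume Q) := by gcongr
      _ = _ := by ring
  have key2 : ∀ Q : Set (Fin n → ℝ), IsCube Q → ∀ᵐ x ∂(volume.restrict Q), 
      (0 < v x ∧ v x < ∞) ∧ eavg Q v ≤ 4 ^ n * C * v x := by
    intro Q hQ
    filter_upwards [ae_restrict_mem (cube_vol hQ).2.2, ae_restrict_of_ae pos, ae_restrict_of_ae hM]
      with x h1 h2 h3
    refine ⟨h2, (key Q hQ x h1).trans ?_⟩
    rw [mul_assoc]; gcongr
  refine ⟨⟨mv, pos, fun Q hQ => ?_⟩, ?_⟩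
  · obtain ⟨q0, qt, qm⟩ := cube_vol hQ
    have : (ae (volume.restrict Q)).NeBot := by
      rw [ae_neBot]; intro h
      rw [Measure.restrict_eq_zero] at h
      exact q0.ne' h
    obtain ⟨x, h1, h2⟩ := (key2 Q hQ).exists
    have h3 : eavg Q v < ∞ := h2.trans_lt (by
      have := h1.2.ne
      finiteness)
    unfold eavg at h3
    have e : ∫⁻ y in Q, v y = (∫⁻ y in Q, v y) / volume Q * volume Q :=
      (ENNReal.div_mul_cancel q0.ne' qt.ne).symm
    rw [e]
    exact ENNReal.mul_lt_top h3 qt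
  · unfold MemAp ApConst
    rw [if_pos rfl]
    refine lt_of_le_of_lt (iSup₂_le fun Q hQ => ?_) (show 4 ^ n * C < ∞ by finiteness)
    refine essSup_le_of_ae_le _ ?_
    filter_upwards [key2 Q hQ] with x hx
    rw [ENNReal.div_le_iff hx.1.1.ne' hx.1.2.ne]
    exact hx.2

lemma dualPair_of_memAp {p : ℝ} (hp : 1 < p) {w : (Fin n → ℝ) → ℝ≥0∞} (hw : IsWeight w)
    (h : MemAp p w) : DualPair p w (fun x => w x ^ (1 - p / (p - 1))) := by
  have hp1 : 0 < p - 1 := by linarith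
  obtain ⟨mw, pos, loc⟩ := hw
  set σ := fun x => w x ^ (1 - p / (p - 1)) with hσ
  unfold MemAp ApConst at h
  rw [if_neg hp.ne'] at h
  set A := ⨆ (Q : Set (Fin n → ℝ)) (_ : IsCube Q),
      eavg Q w * (eavg Q fun x => w x ^ (1 - p / (p - 1))) ^ (p - 1) with hA
  have hQ : ∀ Q : Set (Fin n → ℝ), IsCube Q → eavg Q w * eavg Q σ ^ (p - 1) ≤ A := 
    fun Q hQ => le_iSup₂ (f := fun (Q : Set (Fin n → ℝ)) (_ : IsCube Q) => 
      eavg Q w * (eavg Q fun x => w x ^ (1 - p / (p - 1))) ^ (p - 1)) Q hQ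
  have hsf : ∀ Q : Set (Fin n → ℝ), IsCube Q → ∫⁻ x in Q, σ x < ∞ := by
    intro Q hQ'
    obtain ⟨q0, qt, qm⟩ := cube_vol hQ'
    by_contra hc
    have hc : ∫⁻ x in Q, σ x = ∞ := not_lt_top_iff.1 hc
    have h1 : eavg Q σ = ∞ := by unfold eavg; rw [hc, ENNReal.top_div_of_ne_top qt.ne]
    have h2 : eavg Q w ≠ 0 := by
      unfold eavg
      have := setLIntegral_pos_of_ae mw (pos.mono fun _ h => h.1) q0
      exact (ENNReal.div_pos this.ne' qt.ne).ne'
    have := hQ Q hQ'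
    rw [h1, ENNReal.top_rpow_of_pos hp1, ENNReal.mul_top h2] at this
    exact absurd h (not_lt.2 this)
  refine ⟨mw, mw.pow_const _, pos, Filter.Eventually.of_forall fun _ => rfl, fun x r hr => ?_, 
    fun x r hr => ?_, A * ((2:ℝ≥0∞) ^ n) ^ p, ?_, fun x r hr => ?_⟩
  · obtain ⟨Q, h1, h2, h3⟩ := ball_cube x hr
    exact (lintegral_mono_set h2).trans_lt (loc Q h1)
  · obtain ⟨Q, h1, h2, h3⟩ := ball_cube x hr
    exact (lintegral_mono_set h2).trans_lt (hsf Q h1)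
  · have := h.ne
    finiteness
  · obtain ⟨Q, h1, h2, h3⟩ := ball_cube x hr
    obtain ⟨q0, qt, qm⟩ := cube_vol h1
    have e : ∀ u : (Fin n → ℝ) → ℝ≥0∞, ∫⁻ y in Q, u y = eavg Q u * volume Q := fun u => 
      (ENNReal.div_mul_cancel q0.ne' qt.ne).symm
    calc _ ≤ (∫⁻ y in Q, w y) * (∫⁻ y in Q, σ y) ^ (p - 1) := by
          refine mul_le_mul' (lintegral_mono_set h2) (ENNReal.rpow_le_rpow (lintegral_mono_set h2) hp1.le)
      _ = (eavg Q w * eavg Q σ ^ (p - 1)) * (volume Q ^ (1:ℝ) * volume Q ^ (p - 1)) := by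
          rw [e w, e σ, ENNReal.mul_rpow_of_nonneg _ _ hp1.le, ENNReal.rpow_one]; ring
      _ = (eavg Q w * eavg Q σ ^ (p - 1)) * volume Q ^ p := by
          rw [← ENNReal.rpow_add _ _ q0.ne' qt.ne]; congr 2; ring
      _ ≤ A * (2 ^ n * volume (closedBall x r)) ^ p := by
          refine mul_le_mul' (hQ Q h1) (ENNReal.rpow_le_rpow h3 (by linarith))
      _ = _ := by rw [ENNReal.mul_rpow_of_nonneg _ _ (by linarith), mul_assoc]

lemma TT_to_MM {p : ℝ} (hp : 1 < p) {w F : (Fin n → ℝ) → ℝ≥0∞} 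
    (pos : ∀ᵐ x, 0 < w x ∧ w x < ∞) {D : ℝ≥0∞} (hb : ∀ x, TT p w F x ≤ D * F x) :
    ∀ᵐ x, MM volume (fun y => (F y / w y) ^ (1 / p)) x ≤ D ^ (1 / p) * (F x / w x) ^ (1 / p) := by
  filter_upwards [pos] with x hx
  have hp0 : 0 < p := by linarith
  have h1 := hb x
  unfold TT at h1
  rw [← ENNReal.mul_rpow_of_nonneg _ _ (by positivity), one_div, ENNReal.le_rpow_inv_iff hp0,
    ← mul_div_assoc, ENNReal.le_div_iff_mul_le (Or.inl hx.1.ne') (Or.inl hx.2.ne), mul_comm, ← one_div]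
  exact h1

lemma forward {p : ℝ} (hp : 1 < p) {w : (Fin n → ℝ) → ℝ≥0∞} (hw : IsWeight w)
    (h : MemAp p w) : ∃ w₁ w₂ : (Fin n → ℝ) → ℝ≥0∞, IsWeight w₁ ∧ IsWeight w₂ ∧
        MemAp 1 w₁ ∧ MemAp 1 w₂ ∧ ∀ x, w x = w₁ x * w₂ x ^ (1 - p) := by
  have hp1 : 0 < p - 1 := by linarith
  have hp' : 1 < p / (p - 1) := by rw [lt_div_iff₀ hp1]; linarith
  have dp := dualPair_of_memAp hp hw h
  set σ := fun x => w x ^ (1 - p / (p - 1)) with hσ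
  have sym := dp.symm hp
  obtain ⟨C1, hC1, h1⟩ := TT_bound hp dp
  obtain ⟨C2, hC2, h2⟩ := TT_bound hp' sym
  obtain ⟨F, mF, F0, Fi, D, hD, hT⟩ := rubio 
    (fun F x => TT p w F x + TT (p / (p-1)) σ F x)
    (fun F G hFG x => add_le_add (TT_mono hp w hFG x) (TT_mono hp' σ hFG x))
    (fun F hF => (TT_meas dp.mw F hF).add (TT_meas dp.ms F hF))
    (fun F hF hm x => by
      rw [TT_iSup hp dp.mw F hF hm, TT_iSup hp' dp.ms F hF hm, ENNReal.iSup_add_iSup_of_monotone]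
      · exact fun i j hij => TT_mono hp w (hm hij) x
      · exact fun i j hij => TT_mono hp' σ (hm hij) x)
    (C := C1 + C2) (by finiteness)
    (fun F hF => by
      rw [lintegral_add_left (TT_meas dp.mw F hF), add_mul]
      exact add_le_add (h1 F hF) (h2 F hF))
  have M2 := TT_to_MM hp dp.pos (F := F) (D := D) (fun x => le_self_add.trans (hT x))
  have M1 := TT_to_MM hp' sym.pos (F := F) (D := D) (fun x => le_add_self.trans (hT x))
  have Ft : ∀ᵐ x, F x < ∞ := ae_lt_top mF Fi.ne
  set u1 := fun y => (F y / σ y) ^ (1 / (p / (p-1))) with hu1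
  set u2 := fun y => (F y / w y) ^ (1 / p) with hu2
  set S : Set (Fin n → ℝ) := {x | (0 < w x ∧ w x < ∞) ∧ F x < ∞} with hS
  have mS : MeasurableSet S := 
    ((measurableSet_lt measurable_const dp.mw).inter (measurableSet_lt dp.mw measurable_const)).inter
      (measurableSet_lt mF measurable_const)
  have Sae : ∀ᵐ x, x ∈ S := by
    filter_upwards [dp.pos, Ft] with x a b using ⟨a, b⟩
  set w1 := fun x => if x ∈ S then u1 x else w x with hw1
  set w2 := fun x => if x ∈ S then u2 x else 1 with hw2
  have mw1 : Measurable w1 := Measurable.ite mS (mdivpow mF dp.ms _) dp.mw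
  have mw2 : Measurable w2 := Measurable.ite mS (mdivpow mF dp.mw _) measurable_const
  have e1 : w1 =ᵐ[volume] u1 := by
    filter_upwards [Sae] with x hx; simp [hw1, hx]
  have e2 : w2 =ᵐ[volume] u2 := by
    filter_upwards [Sae] with x hx; simp [hw2, hx]
  have divpos : ∀ {a b : ℝ≥0∞}, (0 < a ∧ a < ∞) → (0 < b ∧ b < ∞) → 0 < a / b ∧ a / b < ∞ := 
    fun ha hb => ⟨ENNReal.div_pos ha.1.ne' hb.2.ne, ENNReal.div_lt_top ha.2.ne hb.1.ne'⟩
  have A1 := A1_of_MM mw1 (C := D ^ (1 / (p / (p-1)))) (by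
      filter_upwards [e1, Sae] with x hx hS
      rw [hx]
      exact rpow_pos_fin (divpos ⟨F0 x, hS.2⟩ (rpow_pos_fin hS.1 _)) _) (by finiteness) (by
      rw [MM_congr _ e1]
      filter_upwards [e1, M1] with x hx hM
      rw [hx]; exact hM)
  have A2 := A1_of_MM mw2 (C := D ^ (1 / p)) (by
      filter_upwards [e2, Sae] with x hx hS
      rw [hx]
      exact rpow_pos_fin (divpos ⟨F0 x, hS.2⟩ hS.1) _) (by finiteness) (by
      rw [MM_congr _ e2]
      filter_upwards [e2, M2] with x hx hM
      rw [hx]; exact hM)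
  refine ⟨w1, w2, A1.1, A2.1, A1.2, A2.2, fun x => ?_⟩
  by_cases hx : x ∈ S
  · simp only [hw1, hw2, if_pos hx, hu1, hu2, hσ]
    have f0 := (F0 x).ne'
    have ft := hx.2.ne
    have w0 := hx.1.1.ne'
    have wt := hx.1.2.ne
    have hF : F x ≠ 0 ∧ F x ≠ ∞ := ⟨f0, ft⟩
    have d1 : ∀ s : ℝ, F x / w x ^ s = F x ^ (1:ℝ) * w x ^ (-s) := by
      intro s; rw [ENNReal.rpow_one, ENNReal.rpow_neg, div_eq_mul_inv]
    have d2 : F x / w x = F x ^ (1:ℝ) * w x ^ (-1:ℝ) := by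
      rw [ENNReal.rpow_one, ENNReal.rpow_neg, ENNReal.rpow_one, div_eq_mul_inv]
    have mm : ∀ a b s : ℝ, (F x ^ a * w x ^ b) ^ s = F x ^ (a * s) * w x ^ (b * s) := by
      intro a b s
      rw [ENNReal.mul_rpow_of_ne_top (ENNReal.rpow_ne_top_of_ne_zero f0 ft)
        (ENNReal.rpow_ne_top_of_ne_zero w0 wt) , ENNReal.rpow_mul, ENNReal.rpow_mul]
    have r : ∀ a b c d : ℝ, F x ^ a * w x ^ b * (F x ^ c * w x ^ d)
        = F x ^ (a + c) * w x ^ (b + d) := by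
      intro a b c d
      rw [ENNReal.rpow_add _ _ f0 ft, ENNReal.rpow_add _ _ w0 wt]; ring
    have hpne : p ≠ 0 := by linarith
    have hpne1 : p - 1 ≠ 0 := hp1.ne'
    rw [d1, d2, mm, mm, mm, r]
    have z1 : 1 * (1 / (p / (p - 1))) + 1 * (1 / p) * (1 - p) = 0 := by
      field_simp; ring
    have z2 : -(1 - p / (p - 1)) * (1 / (p / (p - 1))) + -1 * (1 / p) * (1 - p) = 1 := by
      field_simp; ring
    rw [z1, z2, ENNReal.rpow_zero, ENNReal.rpow_one, one_mul]
  · simp [hw1, hw2, if_neg hx]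

lemma rpow_anti {a b : ℝ≥0∞} (h : a ≤ b) {s : ℝ} (hs : s ≤ 0) : b ^ s ≤ a ^ s := by
  obtain ⟨t, rfl⟩ : ∃ t, s = -t := ⟨-s, by ring⟩
  rw [ENNReal.rpow_neg, ENNReal.rpow_neg, ENNReal.inv_le_inv]
  exact ENNReal.rpow_le_rpow h (by linarith)

lemma A1_avg {v : (Fin n → ℝ) → ℝ≥0∞} (hv : IsWeight v) (h : MemAp 1 v) :
    ∃ C : ℝ≥0∞, (0 < C ∧ C < ∞) ∧ ∀ Q : Set (Fin n → ℝ), IsCube Q →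
      (0 < eavg Q v ∧ eavg Q v < ∞) ∧ ∀ᵐ x ∂(volume.restrict Q), 
        (0 < v x ∧ v x < ∞) ∧ eavg Q v / C ≤ v x := by
  obtain ⟨mv, pos, loc⟩ := hv
  have hlt : ApConst 1 v < ∞ := h
  have C0 : 0 < ApConst 1 v + 1 := lt_of_lt_of_le one_pos le_add_self
  have Ct : ApConst 1 v + 1 < ∞ := ENNReal.add_lt_top.2 ⟨hlt, ENNReal.one_lt_top⟩
  refine ⟨ApConst 1 v + 1, ⟨C0, Ct⟩, fun Q hQ => ?_⟩
  obtain ⟨q0, qt, qm⟩ := cube_vol hQ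
  refine ⟨⟨ENNReal.div_pos (setLIntegral_pos_of_ae mv (pos.mono fun _ h => h.1) q0).ne' qt.ne,
    ENNReal.div_lt_top (loc Q hQ).ne q0.ne'⟩, ?_⟩
  have hle : essSup (fun x => eavg Q v / v x) (volume.restrict Q) ≤ ApConst 1 v := by
    unfold ApConst
    rw [if_pos rfl]
    exact le_iSup₂ (f := fun (Q : Set (Fin n → ℝ)) (_ : IsCube Q) => 
      essSup (fun x => eavg Q v / v x) (volume.restrict Q)) Q hQ
  have hae := ENNReal.ae_le_essSup (μ := volume.restrict Q) (fun x => eavg Q v / v x)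
  filter_upwards [hae, ae_restrict_of_ae pos] with x h1 h2
  refine ⟨h2, ?_⟩
  have h3 := (h1.trans hle).trans (le_self_add (b := 1))
  rw [ENNReal.div_le_iff h2.1.ne' h2.2.ne] at h3
  rw [ENNReal.div_le_iff C0.ne' Ct.ne, mul_comm]
  exact h3

lemma eavg_le_mul {Q : Set (Fin n → ℝ)} {f g : (Fin n → ℝ) → ℝ≥0∞} (c : ℝ≥0∞)
    (mg : Measurable g) (h : ∀ᵐ x ∂(volume.restrict Q), f x ≤ c * g x) :
    eavg Q f ≤ c * eavg Q g := by
  unfold eavg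
  rw [← mul_div_assoc, ← lintegral_const_mul c mg]
  exact ENNReal.div_le_div_right (lintegral_mono_ae h) _

lemma backward {p : ℝ} (hp : 1 < p) {w w₁ w₂ : (Fin n → ℝ) → ℝ≥0∞}
    (hw₁ : IsWeight w₁) (hw₂ : IsWeight w₂) (h₁ : MemAp 1 w₁) (h₂ : MemAp 1 w₂)
    (he : ∀ x, w x = w₁ x * w₂ x ^ (1 - p)) : MemAp p w := by
  have hp1 : 0 < p - 1 := by linarith
  have hpne1 : p - 1 ≠ 0 := hp1.ne'
  have hq : 1 - p / (p - 1) ≤ 0 := by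
    rw [sub_nonpos, le_div_iff₀ hp1]; linarith
  obtain ⟨C₁, hC₁, k₁⟩ := A1_avg hw₁ h₁
  obtain ⟨C₂, hC₂, k₂⟩ := A1_avg hw₂ h₂
  have z1 : (1 - p) * (1 - p / (p - 1)) = 1 := by field_simp; ring
  have z2 : (1 - p / (p - 1)) * (p - 1) = -1 := by field_simp; ring
  unfold MemAp ApConst
  rw [if_neg hp.ne']
  refine lt_of_le_of_lt (iSup₂_le fun Q hQ => ?_) (show C₁ * C₂ ^ (p - 1) < ∞ from
    ENNReal.mul_lt_top hC₁.2 (rpow_pos_fin hC₂ _).2)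
  obtain ⟨a₁, b₁⟩ := k₁ Q hQ
  obtain ⟨a₂, b₂⟩ := k₂ Q hQ
  have i1 : eavg Q w ≤ (eavg Q w₂ / C₂) ^ (1 - p) * eavg Q w₁ := by
    refine eavg_le_mul _ hw₁.1 ?_
    filter_upwards [b₂] with x hx
    rw [he, mul_comm]
    exact mul_le_mul_left (rpow_anti hx.2 (by linarith)) _
  have i2 : (eavg Q fun x => w x ^ (1 - p / (p - 1))) 
      ≤ (eavg Q w₁ / C₁) ^ (1 - p / (p - 1)) * eavg Q w₂ := by
    refine eavg_le_mul _ hw₂.1 ?_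
    filter_upwards [b₁, b₂] with x hx hy
    rw [he, ENNReal.mul_rpow_of_ne_top hx.1.2.ne (rpow_pos_fin hy.1 _).2.ne, ← ENNReal.rpow_mul,
      z1, ENNReal.rpow_one]
    exact mul_le_mul_left (rpow_anti hx.2 hq) _
  refine (mul_le_mul' i1 (ENNReal.rpow_le_rpow i2 hp1.le)).trans (le_of_eq ?_)
  generalize eavg Q w₁ = x at *
  generalize eavg Q w₂ = y at *
  rw [ENNReal.mul_rpow_of_nonneg _ _ hp1.le, ← ENNReal.rpow_mul, z2, ENNReal.rpow_neg_one,
    show 1 - p = -(p - 1) by ring, ENNReal.rpow_neg, ENNReal.div_rpow_of_nonneg _ _ hp1.le,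
    ENNReal.inv_div (Or.inl hC₁.2.ne) (Or.inl hC₁.1.ne'),
    ENNReal.inv_div (Or.inl (rpow_pos_fin hC₂ _).2.ne) (Or.inl (rpow_pos_fin hC₂ _).1.ne')]
  have Y := rpow_pos_fin a₂ (p - 1)
  generalize y ^ (p - 1) = t at *
  rw [div_eq_mul_inv, div_eq_mul_inv]
  calc _ = C₁ * C₂ ^ (p - 1) * (t * t⁻¹) * (x * x⁻¹) := by ring
    _ = _ := by
      rw [ENNReal.mul_inv_cancel Y.1.ne' Y.2.ne, ENNReal.mul_inv_cancel a₁.1.ne' a₁.2.ne,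
        mul_one, mul_one]

/-- Jones factorization: for `1 < p < ∞`, a weight `w ∈ A_p` iff
there exist `w₁, w₂ ∈ A_1` with `w = w₁ w₂^{1-p}`. -/
theorem statement10 (n : ℕ) (p : ℝ) (hp : 1 < p)
    (w : (Fin n → ℝ) → ℝ≥0∞) (hw : IsWeight w) :
    MemAp p w ↔
      ∃ w₁ w₂ : (Fin n → ℝ) → ℝ≥0∞, IsWeight w₁ ∧ IsWeight w₂ ∧
        MemAp 1 w₁ ∧ MemAp 1 w₂ ∧ ∀ x, w x = w₁ x * w₂ x ^ (1 - p) := by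
  constructor
  · exact forward hp hw
  · rintro ⟨w₁, w₂, a, b, c, d, e⟩
    exact backward hp a b c d e
end
end
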